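/- Let X be a finite-dimensional generalized cactoid. Then X is an absolute neighborhood retract (ANR) if and only if X has only finitely many maximal cyclic subsets. -/

import Mathlib

open Metric Set

/-- A Jordan curve: a subset homeomorphic to the circle. -/
def IsJordanCurve {X : Type} [TopologicalSpace X] (J : Set X) : Prop :=
  Nonempty (AddCircle (1 : ℝ) ≃ₜ J)

/-- A set is cyclicly connected if every pair of its points lies on a Jordan curve in it. -/
def CyclicallyConnected {X : Type} [TopologicalSpace X] (C : Set X) : Prop :=
  ∀ x ∈ C, ∀ y ∈ C, ∃ J : Set X, J ⊆ C ∧ IsJordanCurve J ∧ x ∈ J ∧ y ∈ J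

/-- A maximal cyclic subset: non-degenerate, cyclicly connected, and not a proper subset
of any cyclicly connected subset. -/
def MaximalCyclic {X : Type} [TopologicalSpace X] (T : Set X) : Prop :=
  ¬ T.Subsingleton ∧ CyclicallyConnected T ∧
    ∀ C : Set X, CyclicallyConnected C → T ⊆ C → C = T
/-- Covering dimension at most `n`: every open cover admits an open shrinking
(refinement) of order at most `n + 1`. -/
def CovDimLE (X : Type) [TopologicalSpace X] (n : ℕ) : Prop :=
  ∀ (ι : Type) (U : ι → Set X), (∀ i, IsOpen (U i)) → (⋃ i, U i) = Set.univ →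
    ∃ V : ι → Set X, (∀ i, IsOpen (V i)) ∧ (∀ i, V i ⊆ U i) ∧ (⋃ i, V i) = Set.univ ∧
      ∀ x : X, {i | x ∈ V i}.Finite ∧ {i | x ∈ V i}.ncard ≤ n + 1

/-- Homeomorphic to the 2-sphere. -/
def IsTopological2Sphere (T : Type) [TopologicalSpace T] : Prop :=
  Nonempty (T ≃ₜ Metric.sphere (0 : EuclideanSpace ℝ (Fin 3)) 1)

/-- A closed surface: a compact, connected, Hausdorff topological 2-manifold
without boundary. -/
def IsClosedSurface (S : Type) [TopologicalSpace S] : Prop :=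
  CompactSpace S ∧ ConnectedSpace S ∧ T2Space S ∧
    Nonempty (ChartedSpace (EuclideanSpace ℝ (Fin 2)) S)

/-- An absolute neighborhood retract: whenever `X` embeds as a closed subset of a
metric space `Y`, its image is a retract of some open neighborhood. -/
def IsANR (X : Type) [MetricSpace X] : Prop :=
  ∀ (Y : Type) (mY : MetricSpace Y), letI := mY; ∀ e : X → Y, Topology.IsClosedEmbedding e →
    ∃ U : Set Y, IsOpen U ∧ Set.range e ⊆ U ∧
      ∃ r : C(↥U, Y), (∀ u : ↥U, r u ∈ Set.range e) ∧
        ∀ (x : X) (h : e x ∈ U), r ⟨e x, h⟩ = e x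

section Peano

open Filter Topology

variable {X : Type} [MetricSpace X]

/-- The points `x` and `y` lie in a common connected set all of whose points are within `ε` of
each other. -/
def ConnectedWithin (ε : ℝ) (x y : X) : Prop :=
  ∃ S : Set X, IsPreconnected S ∧ x ∈ S ∧ y ∈ S ∧ ∀ u ∈ S, ∀ v ∈ S, dist u v ≤ ε

theorem ConnectedWithin.refl {ε : ℝ} (hε : 0 ≤ ε) (x : X) : ConnectedWithin ε x x :=
  ⟨{x}, isPreconnected_singleton, rfl, rfl, by simp [hε]⟩

theorem ConnectedWithin.symm {ε : ℝ} {x y : X} (h : ConnectedWithin ε x y) :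
    ConnectedWithin ε y x := by
  obtain ⟨S, hS, hx, hy, hd⟩ := h
  exact ⟨S, hS, hy, hx, hd⟩

theorem ConnectedWithin.dist_le {ε : ℝ} {x y : X} (h : ConnectedWithin ε x y) :
    dist x y ≤ ε := by
  obtain ⟨S, -, hx, hy, hd⟩ := h
  exact hd x hx y hy

theorem eventually_connectedWithin [LocallyConnectedSpace X] {ε : ℝ} (hε : 0 < ε) (x : X) :
    ∀ᶠ y in 𝓝 x, ConnectedWithin ε x y := by
  obtain ⟨V, ⟨hVo, hxV, hVc⟩, hV⟩ :=
    (LocallyConnectedSpace.open_connected_basis x).mem_iff.1 (ball_mem_nhds x (half_pos hε))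
  filter_upwards [hVo.mem_nhds hxV] with y hy
  refine ⟨V, hVc.isPreconnected, hxV, hy, fun u hu v hv => ?_⟩
  have h1 := hV hu
  have h2 := hV hv
  simp only [mem_ball] at h1 h2
  linarith [dist_triangle_right u v x]

/-- Points of a preconnected set are joined by finite chains with small connected links. -/
theorem IsPreconnected.exists_chain [LocallyConnectedSpace X] {S : Set X}
    (hS : IsPreconnected S) {η : ℝ} (hη : 0 < η) {x y : X} (hx : x ∈ S) (hy : y ∈ S) :
    ∃ (N : ℕ) (g : ℕ → X), g 0 = x ∧ (∀ i, N ≤ i → g i = y) ∧ (∀ i, g i ∈ S) ∧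
      ∀ i, ConnectedWithin η (g i) (g (i + 1)) := by
  refine hS.induction₂ (fun x y => ∃ (N : ℕ) (g : ℕ → X), g 0 = x ∧ (∀ i, N ≤ i → g i = y) ∧
    (∀ i, g i ∈ S) ∧ ∀ i, ConnectedWithin η (g i) (g (i + 1))) ?_ ?_ ?_ hx hy
  · intro x hx
    filter_upwards [(eventually_connectedWithin hη x).filter_mono nhdsWithin_le_nhds,
      self_mem_nhdsWithin] with y hxy hy
    refine ⟨1, fun i => if i = 0 then x else y, by simp, ?_, ?_, ?_⟩
    · intro i hi
      simp [show i ≠ 0 by omega]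
    · intro i
      dsimp only
      split_ifs <;> assumption
    · intro i
      by_cases hi : i = 0
      · simpa [hi] using hxy
      · simpa [hi] using ConnectedWithin.refl hη.le y
  · rintro x y z - - - ⟨N, g, g0, gN, gS, gc⟩ ⟨M, k, k0, kM, kS, kc⟩
    refine ⟨N + M, fun i => if i < N then g i else k (i - N), ?_, ?_, ?_, ?_⟩
    · by_cases h : 0 < N
      · simpa [h] using g0
      · have : g 0 = y := gN 0 (by omega)
        simp [h, k0, ← this, g0]
    · intro i hi
      simpa [show ¬ i < N by omega] using kM (i - N) (by omega)
    · intro i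
      dsimp only
      split_ifs
      · exact gS i
      · exact kS _
    · intro i
      dsimp only
      by_cases h1 : i + 1 < N
      · simpa [h1, show i < N by omega] using gc i
      · by_cases h2 : i < N
        · have h3 : i + 1 = N := by omega
          have := gc i
          rw [gN (i + 1) h3.ge] at this
          simpa [h2, h3, k0] using this
        · have := kc (i - N)
          rw [show i - N + 1 = i + 1 - N by omega] at this
          simpa [h1, h2] using this
  · rintro x y - - ⟨N, g, g0, gN, gS, gc⟩
    refine ⟨N, fun i => g (N - i), gN _ le_rfl, ?_, fun i => gS _, ?_⟩
    · intro i hi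
      simp [show N - i = 0 by omega, g0]
    · intro i
      by_cases h : i < N
      · have := gc (N - (i + 1))
        rw [show N - (i + 1) + 1 = N - i by omega] at this
        exact this.symm
      · simpa [show N - i = 0 by omega, show N - (i + 1) = 0 by omega] using
          ConnectedWithin.refl hη.le _

/-- A chain with `ε`-small connected links is refined to one with `η`-small connected links,
all links being subdivided into the same number of parts. -/
theorem exists_chain_refinement [LocallyConnectedSpace X] {ε η : ℝ} (hη : 0 < η) {M : ℕ}
    {g : ℕ → X} (hc : ∀ i, ConnectedWithin ε (g i) (g (i + 1))) (hM : ∀ i, M ≤ i → g i = g M) :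
    ∃ (N : ℕ) (k : ℕ → X), 0 < N ∧ (∀ i, k (i * N) = g i) ∧
      (∀ i, ConnectedWithin η (k i) (k (i + 1))) ∧ (∀ j, dist (k j) (g (j / N)) ≤ ε) ∧
      ∀ j, M * N ≤ j → k j = k (M * N) := by
  have hch : ∀ i, ∃ (N : ℕ) (k : ℕ → X), k 0 = g i ∧ (∀ j, N ≤ j → k j = g (i + 1)) ∧
      (∀ j, dist (k j) (g i) ≤ ε) ∧ (∀ j, ConnectedWithin η (k j) (k (j + 1))) ∧
      (M ≤ i → N = 0) := by
    intro i
    by_cases hi : M ≤ i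
    · refine ⟨0, fun _ => g i, rfl, fun j _ => ?_, fun j => ?_, fun j => .refl hη.le _,
        fun _ => rfl⟩
      · rw [hM i hi, hM (i + 1) (by omega)]
      · rw [dist_self]
        exact dist_nonneg.trans (hc i).dist_le
    · obtain ⟨S, hS, hx, hy, hd⟩ := hc i
      obtain ⟨N, k, k0, kN, kS, kc⟩ := hS.exists_chain hη hx hy
      exact ⟨N, k, k0, kN, fun j => hd _ (kS j) _ hx, kc, fun h => absurd h hi⟩
  choose n k k0 kn kd kc kM using hch
  set N := (Finset.range M).sup n + 1 with hN
  have hnN : ∀ i, n i ≤ N := by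
    intro i
    by_cases hi : M ≤ i
    · simp [kM i hi]
    · exact (Finset.le_sup (f := n) (Finset.mem_range.2 (not_le.1 hi))).trans (Nat.le_succ _)
  have hN0 : 0 < N := Nat.succ_pos _
  have hmul : ∀ i, k (i * N / N) (i * N % N) = g i := by
    intro i
    rw [Nat.mul_div_cancel _ hN0, Nat.mul_mod_left, k0]
  refine ⟨N, fun j => k (j / N) (j % N), hN0, hmul, ?_, fun j => kd _ _, ?_⟩
  · intro j
    have hj := kc (j / N) (j % N)
    by_cases h : j % N + 1 < N
    · have h1 : (j + 1) / N = j / N := by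
        rw [Nat.div_eq_iff hN0]
        have := Nat.div_add_mod' j N
        omega
      have h2 : (j + 1) % N = j % N + 1 := by
        rw [Nat.add_mod_of_add_mod_lt]
        · rw [Nat.mod_eq_of_lt (a := 1) (by omega)]
        · rwa [Nat.mod_eq_of_lt (a := 1) (by omega)]
      simpa only [h1, h2] using hj
    · have h3 : j % N + 1 = N := by have := Nat.mod_lt j hN0; omega
      have h4 : j + 1 = (j / N + 1) * N := by
        have := Nat.div_add_mod' j N
        rw [Nat.add_mul]; omega
      rw [h3, kn _ N (hnN _)] at hj
      have := hmul (j / N + 1)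
      rw [← h4] at this
      simpa only [this] using hj
  · intro j hj
    have hjN : M ≤ j / N := (Nat.le_div_iff_mul_le hN0).2 hj
    dsimp only
    rw [hmul, ← hM _ hjN]
    by_cases h : j % N = 0
    · rw [h, k0]
    · rw [kn _ _ (by rw [kM _ hjN]; omega), hM _ hjN, hM _ (by omega)]

/-- In a compact locally connected metric space, two points of a small connected set are joined by
a small path. -/
theorem ConnectedWithin.joinedIn [CompactSpace X] [LocallyConnectedSpace X] {ε : ℝ}
    (hε : 0 < ε) {x y : X} (h : ConnectedWithin ε x y) : JoinedIn (closedBall x (3 * ε)) x y := by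
  let e : ℕ → ℝ := fun k => 2 * ε / 2 / 2 ^ k
  have he0 : e 0 = ε := by simp [e]
  have hepos : ∀ k, 0 < e k := fun k => by positivity
  let P : ℕ → ℕ × (ℕ → X) → Prop := fun k s => 0 < s.1 ∧ s.2 0 = x ∧
    (∀ i, s.1 ≤ i → s.2 i = y) ∧ ∀ i, ConnectedWithin (e k) (s.2 i) (s.2 (i + 1))
  have hstep : ∀ k s, P k s → ∃ s', P (k + 1) s' ∧
      ∃ N : ℕ, 0 < N ∧ s'.1 = s.1 * N ∧ ∀ j, dist (s'.2 j) (s.2 (j / N)) ≤ e k := by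
    rintro k ⟨M, g⟩ ⟨hM, g0, gM, gc⟩
    obtain ⟨N, k', hN, kmul, kc, kd, kM⟩ := exists_chain_refinement (hepos (k + 1)) gc
      (M := M) (fun i hi => by rw [gM i hi, gM M le_rfl])
    refine ⟨(M * N, k'), ⟨Nat.mul_pos hM hN, ?_, fun i hi => ?_, kc⟩, N, hN, rfl, kd⟩
    · have := kmul 0
      rwa [zero_mul, g0] at this
    · exact (kM i hi).trans ((kmul M).trans (gM M le_rfl))
  choose! F hFP hFR using hstep
  let s : ℕ → ℕ × (ℕ → X) := fun n =>
    Nat.rec (1, fun i => if i = 0 then x else y) (fun k t => F k t) n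
  have hs : ∀ k, P k (s k) := by
    intro k
    induction k with
    | zero =>
      refine ⟨one_pos, by simp [s], fun i hi => ?_, fun i => ?_⟩
      · have : i ≠ 0 := by simp [s] at hi; omega
        simp [s, this]
      · rw [he0]
        by_cases hi : i = 0
        · simpa [s, hi] using h
        · simpa [s, hi] using ConnectedWithin.refl hε.le y
    | succ k ih => exact hFP k _ ih
  let f : ℕ → unitInterval → X := fun k t => (s k).2 ⌊(t : ℝ) * (s k).1⌋₊
  have hf : ∀ t k, dist (f k t) (f (k + 1) t) ≤ e k := by
    intro t k
    obtain ⟨N, hN, h1, h2⟩ := hFR k _ (hs k)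
    have h3 := h2 ⌊(t : ℝ) * (s (k + 1)).1⌋₊
    have h4 : ⌊(t : ℝ) * (s (k + 1)).1⌋₊ / N = ⌊(t : ℝ) * (s k).1⌋₊ := by
      rw [← Nat.floor_div_natCast]
      congr 1
      change (t : ℝ) * ((F k (s k)).1 : ℝ) / N = _
      rw [h1]
      have : (N : ℝ) ≠ 0 := by positivity
      push_cast
      field_simp
    rw [h4] at h3
    rw [dist_comm]
    exact h3
  have hcau : ∀ t, ∃ a, Tendsto (fun k => f k t) atTop (𝓝 a) := fun t =>
    cauchySeq_tendsto_of_complete (cauchySeq_of_le_geometric_two (C := 2 * ε) (hf t))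
  choose p hp using hcau
  have hd : ∀ t k, dist (f k t) (p t) ≤ 2 * e k := by
    intro t k
    have := dist_le_of_le_geometric_two_of_tendsto (C := 2 * ε) (hf t) (hp t) k
    refine this.trans (le_of_eq ?_)
    simp only [e]
    ring
  have helim : Tendsto e atTop (𝓝 0) := by
    have := tendsto_pow_atTop_nhds_zero_of_lt_one (r := (1 / 2 : ℝ)) (by norm_num) (by norm_num)
    have := this.const_mul (2 * ε / 2)
    rw [mul_zero] at this
    refine this.congr fun k => ?_
    simp only [e, one_div, inv_pow]
    rfl
  have hpc : Continuous p := by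
    rw [Metric.continuous_iff]
    intro t δ hδ
    obtain ⟨k, hk⟩ := ((helim.const_mul 5).eventually_lt_const (by simpa using hδ)).exists
    obtain ⟨hM, -, -, hc⟩ := hs k
    have hM' : (0 : ℝ) < (s k).1 := by exact_mod_cast hM
    refine ⟨1 / (s k).1, by positivity, fun u hu => ?_⟩
    have key : ∀ a b : unitInterval, (a : ℝ) ≤ b → dist a b < 1 / (s k).1 →
        dist (f k a) (f k b) ≤ e k := by
      intro a b hab hd
      have h1 : ⌊(a : ℝ) * (s k).1⌋₊ ≤ ⌊(b : ℝ) * (s k).1⌋₊ := Nat.floor_mono (by gcongr)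
      have h2 : ⌊(b : ℝ) * (s k).1⌋₊ ≤ ⌊(a : ℝ) * (s k).1⌋₊ + 1 := by
        rw [← Nat.floor_add_one (mul_nonneg a.2.1 hM'.le)]
        apply Nat.floor_mono
        rw [Subtype.dist_eq, Real.dist_eq, abs_sub_comm, abs_of_nonneg (by linarith),
          lt_div_iff₀ hM'] at hd
        linarith
      rcases h1.eq_or_lt with h3 | h3
      · simp only [f, h3, dist_self]
        exact (hepos k).le
      · have h4 : ⌊(b : ℝ) * (s k).1⌋₊ = ⌊(a : ℝ) * (s k).1⌋₊ + 1 := by omega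
        simp only [f, h4]
        exact (hc _).dist_le
    have hut : dist (f k u) (f k t) ≤ e k := by
      rcases le_total (u : ℝ) t with h | h
      · exact key u t h hu
      · rw [dist_comm]
        exact key t u h (by rwa [dist_comm])
    have h1 := hd u k
    have h2 := hd t k
    have h3 := dist_triangle4 (p u) (f k u) (f k t) (p t)
    rw [dist_comm (p u) (f k u)] at h3
    linarith
  have hconst : ∀ t a, (∀ k, f k t = a) → p t = a := fun t a ha =>
    tendsto_nhds_unique (hp t) (by simp [ha])
  have hball : ∀ t, f 0 t = x ∨ f 0 t = y := by
    intro t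
    by_cases h : ⌊(t : ℝ)⌋₊ = 0 <;> simp [f, s, h]
  refine ⟨⟨⟨p, hpc⟩, hconst _ _ fun k => ?_, hconst _ _ fun k => ?_⟩, fun t => ?_⟩
  · simpa [f] using (hs k).2.1
  · simpa [f] using (hs k).2.2.1 _ le_rfl
  · have h1 := hd t 0
    rw [he0] at h1
    change dist (p t) x ≤ 3 * ε
    have h2 : dist (f 0 t) x ≤ ε := by
      rcases hball t with h2 | h2 <;> rw [h2]
      · simp [hε.le]
      · exact h.symm.dist_le
    linarith [dist_triangle_left (p t) x (f 0 t)]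

/-- A compact locally connected metric space is locally path connected. -/
theorem locallyPathConnectedSpace_of_compact [CompactSpace X] [LocallyConnectedSpace X] :
    LocallyPathConnectedSpace X := by
  refine ⟨fun x => Filter.hasBasis_self.2 fun U hU => ?_⟩
  obtain ⟨r, hr, hrU⟩ := Metric.mem_nhds_iff.1 hU
  refine ⟨pathComponentIn U x, ?_, isPathConnected_pathComponentIn (mem_of_mem_nhds hU),
    pathComponentIn_subset⟩
  filter_upwards [eventually_connectedWithin (ε := r / 4) (by positivity) x] with y hy
  refine (hy.joinedIn (by positivity)).mono fun z hz => hrU ?_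
  rw [mem_closedBall] at hz
  rw [mem_ball]
  linarith

end Peano

section Arc

open Filter Topology

variable {X : Type} [MetricSpace X]

/-- The set `A` is an arc with endpoints `a` and `b`. -/
def IsArc (A : Set X) (a b : X) : Prop :=
  ∃ f : ℝ → X, ContinuousOn f (Icc 0 1) ∧ InjOn f (Icc 0 1) ∧ f 0 = a ∧ f 1 = b ∧
    f '' Icc 0 1 = A

theorem IsArc.of_Icc {f : ℝ → X} {c d : ℝ} (hcd : c < d) (hf : ContinuousOn f (Icc c d))
    (hi : InjOn f (Icc c d)) : IsArc (f '' Icc c d) (f c) (f d) := by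
  have hmaps : (fun t : ℝ => (d - c) * t + c) '' Icc 0 1 = Icc c d := by
    rw [image_affine_Icc' (by linarith)]
    simp
  have hm : MapsTo (fun t : ℝ => (d - c) * t + c) (Icc 0 1) (Icc c d) := by
    rw [← hmaps]
    exact mapsTo_image _ _
  refine ⟨fun t => f ((d - c) * t + c), hf.comp (by fun_prop) hm, ?_, by simp, by simp, ?_⟩
  · intro s hs t ht hst
    have h : (d - c) * s + c = (d - c) * t + c := hi (hm hs) (hm ht) hst
    have h0 : d - c ≠ 0 := by linarith
    exact mul_left_cancel₀ h0 (by linarith)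
  · rw [← hmaps, image_image]

namespace IsArc

variable {A B : Set X} {a b c : X}

theorem symm (h : IsArc A a b) : IsArc A b a := by
  obtain ⟨f, hf, hi, h0, h1, rfl⟩ := h
  have hm : MapsTo (fun t : ℝ => 1 - t) (Icc 0 1) (Icc 0 1) :=
    fun t ht => ⟨by linarith [ht.2], by linarith [ht.1]⟩
  refine ⟨fun t => f (1 - t), hf.comp (by fun_prop) hm, fun s hs t ht hst => ?_, by simp [h1],
    by simp [h0], ?_⟩
  · have := hi (hm hs) (hm ht) hst
    linarith
  · ext x
    constructor
    · rintro ⟨t, ht, rfl⟩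
      exact ⟨_, hm ht, rfl⟩
    · rintro ⟨t, ht, rfl⟩
      exact ⟨_, hm ht, by simp⟩

theorem left_mem (h : IsArc A a b) : a ∈ A := by
  obtain ⟨f, -, -, rfl, -, rfl⟩ := h
  exact mem_image_of_mem _ (by simp)

theorem right_mem (h : IsArc A a b) : b ∈ A := h.symm.left_mem

theorem ne (h : IsArc A a b) : a ≠ b := by
  obtain ⟨f, -, hi, rfl, rfl, rfl⟩ := h
  intro h
  have := hi (by simp) (by simp) h
  norm_num at this

theorem isCompact (h : IsArc A a b) : IsCompact A := by
  obtain ⟨f, hf, -, -, -, rfl⟩ := h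
  exact isCompact_Icc.image_of_continuousOn hf

theorem isClosed (h : IsArc A a b) : IsClosed A := h.isCompact.isClosed

theorem joinedIn (h : IsArc A a b) : JoinedIn A a b := by
  obtain ⟨f, hf, hi, h0, h1, rfl⟩ := h
  exact JoinedIn.ofLine hf h0 h1 le_rfl

/-- The points of an arc split it into two arcs. -/
theorem split (h : IsArc A a b) (hc : c ∈ A) (hca : c ≠ a) (hcb : c ≠ b) :
    ∃ A₁ A₂, IsArc A₁ a c ∧ IsArc A₂ c b ∧ A₁ ∪ A₂ = A ∧ A₁ ∩ A₂ = {c} := by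
  obtain ⟨f, hf, hi, rfl, rfl, rfl⟩ := h
  obtain ⟨t, ht, rfl⟩ := hc
  have h0 : 0 < t := ht.1.lt_of_ne (by rintro rfl; exact hca rfl)
  have h1 : t < 1 := ht.2.lt_of_ne (by rintro rfl; exact hcb rfl)
  have hs1 : Icc 0 t ⊆ Icc (0 : ℝ) 1 := Icc_subset_Icc le_rfl ht.2
  have hs2 : Icc t 1 ⊆ Icc (0 : ℝ) 1 := Icc_subset_Icc ht.1 le_rfl
  refine ⟨f '' Icc 0 t, f '' Icc t 1, .of_Icc h0 (hf.mono hs1) (hi.mono hs1),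
    .of_Icc h1 (hf.mono hs2) (hi.mono hs2), ?_, ?_⟩
  · rw [← image_union, Icc_union_Icc_eq_Icc ht.1 ht.2]
  · rw [← hi.image_inter hs1 hs2, Icc_inter_Icc_eq_singleton ht.1 ht.2, image_singleton]

/-- Two arcs meeting only in a common endpoint form an arc. -/
theorem union (hA : IsArc A a b) (hB : IsArc B b c) (hAB : A ∩ B ⊆ {b}) :
    IsArc (A ∪ B) a c := by
  obtain ⟨f, hf, hfi, rfl, hfb, rfl⟩ := hA
  obtain ⟨g, hg, hgi, rfl, rfl, rfl⟩ := hB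
  set h : ℝ → X := fun t => if t ≤ 1 then f t else g (t - 1) with hh
  have h1 : EqOn h f (Icc 0 1) := fun t ht => by simp [hh, ht.2]
  have hgm : MapsTo (fun t : ℝ => t - 1) (Icc 1 2) (Icc 0 1) :=
    fun t ht => ⟨by linarith [ht.1], by linarith [ht.2]⟩
  have h2 : EqOn h (fun t => g (t - 1)) (Icc 1 2) := by
    intro t ht
    rcases ht.1.eq_or_lt with rfl | hlt
    · simp [hh, hfb]
    · simp [hh, hlt.not_ge]
  have hu : Icc (0 : ℝ) 1 ∪ Icc 1 2 = Icc 0 2 :=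
    Icc_union_Icc_eq_Icc (by norm_num) (by norm_num)
  have hi2 : InjOn h (Icc 1 2) := by
    refine h2.injOn_iff.2 fun s hs t ht hst => ?_
    have := hgi (hgm hs) (hgm ht) hst
    linarith
  have key : ∀ s ∈ Icc (0 : ℝ) 1, ∀ t ∈ Icc (1 : ℝ) 2, h s = h t → s = t := by
    intro s hs t ht hst
    rw [h1 hs, h2 ht] at hst
    have hmem : f s ∈ f '' Icc 0 1 ∩ g '' Icc 0 1 :=
      ⟨mem_image_of_mem _ hs, hst ▸ mem_image_of_mem _ (hgm ht)⟩
    have h3 : f s = g 0 := hAB hmem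
    have h4 : s = 1 := hfi hs (by simp) (h3.trans hfb.symm)
    have h5 : t - 1 = 0 := hgi (hgm ht) (by simp) (hst.symm.trans h3)
    linarith
  have hinj : InjOn h (Icc 0 2) := by
    rw [← hu]
    rintro s (hs | hs) t (ht | ht) hst
    · exact (h1.injOn_iff.2 hfi) hs ht hst
    · exact key s hs t ht hst
    · exact (key t ht s hs hst.symm).symm
    · exact hi2 hs ht hst
  have hcont : ContinuousOn h (Icc 0 2) := by
    rw [← hu]
    refine ContinuousOn.union_of_isClosed ((continuousOn_congr h1).2 hf)
      ((continuousOn_congr h2).2 (hg.comp (by fun_prop) hgm)) isClosed_Icc isClosed_Icc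
  have hres := IsArc.of_Icc (by norm_num) hcont hinj
  rw [← hu, image_union, h1.image_eq, h2.image_eq] at hres
  have hg' : (fun t => g (t - 1)) '' Icc 1 2 = g '' Icc 0 1 := by
    rw [← image_image g (fun t : ℝ => t - 1), image_sub_const_Icc]
    norm_num
  rw [hg'] at hres
  convert hres using 1
  · simp [hh]
  · norm_num [hh]

/-- An arc that reaches a closed set contains a subarc reaching it only at the end. -/
theorem exists_first_hit {F : Set X} (h : IsArc A a b) (hF : IsClosed F) (ha : a ∉ F)
    (hAF : (A ∩ F).Nonempty) : ∃ p ∈ F, ∃ A' ⊆ A, IsArc A' a p ∧ A' ∩ F = {p} := by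
  obtain ⟨f, hf, hi, rfl, rfl, rfl⟩ := h
  set K : Set ℝ := Icc 0 1 ∩ f ⁻¹' F
  have hK : IsClosed K := hf.preimage_isClosed_of_isClosed isClosed_Icc hF
  have hKne : K.Nonempty := by
    obtain ⟨_, ⟨t, ht, rfl⟩, htF⟩ := hAF
    exact ⟨t, ht, htF⟩
  have hKb : BddBelow K := ⟨0, fun t ht => ht.1.1⟩
  set t := sInf K
  have htK : t ∈ K := hK.csInf_mem hKne hKb
  have h0 : 0 < t := htK.1.1.lt_of_ne (by
    intro h
    exact ha (h ▸ htK.2))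
  have hs : Icc 0 t ⊆ Icc (0 : ℝ) 1 := Icc_subset_Icc le_rfl htK.1.2
  refine ⟨f t, htK.2, f '' Icc 0 t, image_mono hs, .of_Icc h0 (hf.mono hs) (hi.mono hs), ?_⟩
  apply subset_antisymm
  · rintro _ ⟨⟨s, hs', rfl⟩, hsF⟩
    have : t ≤ s := csInf_le hKb ⟨hs hs', hsF⟩
    rw [mem_singleton_iff, le_antisymm hs'.2 this]
  · rintro _ rfl
    exact ⟨mem_image_of_mem _ ⟨h0.le, le_rfl⟩, htK.2⟩

/-- Two arcs with common endpoints that are otherwise disjoint form a Jordan curve. -/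
theorem isJordanCurve_union (hA : IsArc A a b) (hB : IsArc B a b) (hAB : A ∩ B ⊆ {a, b}) :
    IsJordanCurve (A ∪ B) := by
  have hne := hA.ne
  obtain ⟨f, hf, hfi, hfa, hfb, rfl⟩ := hA
  obtain ⟨g, hg, hgi, hga, hgb, rfl⟩ := hB.symm
  have : Fact (0 < (1 : ℝ)) := ⟨one_pos⟩
  set h : ℝ → X := fun t => if t ≤ 1 / 2 then f (2 * t) else g (2 * t - 1) with hh
  have m1 : MapsTo (fun t : ℝ => 2 * t) (Icc 0 (1 / 2)) (Icc 0 1) :=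
    fun t ht => ⟨by linarith [ht.1], by linarith [ht.2]⟩
  have m2 : MapsTo (fun t : ℝ => 2 * t - 1) (Icc (1 / 2) 1) (Icc 0 1) :=
    fun t ht => ⟨by linarith [ht.1], by linarith [ht.2]⟩
  have h1 : EqOn h (fun t => f (2 * t)) (Icc 0 (1 / 2)) := fun t ht => by simp only [hh, ht.2, if_true]
  have h2 : EqOn h (fun t => g (2 * t - 1)) (Icc (1 / 2) 1) := by
    intro t ht
    rcases ht.1.eq_or_lt with rfl | hlt
    · norm_num [hh, hfb, hga]
    · simp only [hh, hlt.not_ge, if_false]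
  have hu : Icc (0 : ℝ) (1 / 2) ∪ Icc (1 / 2) 1 = Icc 0 1 :=
    Icc_union_Icc_eq_Icc (by norm_num) (by norm_num)
  have h0 : h 0 = a := by simp [hh, hfa]
  have hone : h 1 = a := by norm_num [hh, hgb]
  have hcont : ContinuousOn h (Icc 0 1) := by
    rw [← hu]
    exact ContinuousOn.union_of_isClosed
      ((continuousOn_congr h1).2 (hf.comp (by fun_prop) m1))
      ((continuousOn_congr h2).2 (hg.comp (by fun_prop) m2)) isClosed_Icc isClosed_Icc
  have himg : h '' Icc 0 1 = f '' Icc 0 1 ∪ g '' Icc 0 1 := by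
    rw [← hu, image_union, h1.image_eq, h2.image_eq, ← image_image f (fun t : ℝ => 2 * t),
      ← image_image g (fun t : ℝ => 2 * t - 1)]
    congr 2
    · rw [image_mul_left_Icc' (by norm_num)]
      norm_num
    · have : (fun t : ℝ => 2 * t - 1) = fun t : ℝ => 2 * t + (-1) := rfl
      rw [this, image_affine_Icc' (by norm_num)]
      norm_num
  have key : ∀ s ∈ Icc (0 : ℝ) (1 / 2), ∀ t ∈ Icc (1 / 2 : ℝ) 1, t ≠ 1 → h s = h t → s = t := by
    intro s hs t ht ht1 hst
    rw [h1 hs, h2 ht] at hst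
    dsimp only at hst
    have hmem : f (2 * s) ∈ f '' Icc 0 1 ∩ g '' Icc 0 1 :=
      ⟨mem_image_of_mem _ (m1 hs), hst ▸ mem_image_of_mem _ (m2 ht)⟩
    rcases hAB hmem with h3 | h3
    · exfalso
      rw [hst, ← hgb] at h3
      have := hgi (m2 ht) (by simp) h3
      apply ht1
      dsimp only at this
      linarith
    · have h4 : 2 * s = 1 := hfi (m1 hs) (by simp) (h3.trans hfb.symm)
      have h5 : 2 * t - 1 = 0 := hgi (m2 ht) (by simp) ((hst.symm.trans h3).trans hga.symm)
      linarith
  have hinj : InjOn h (Ico 0 1) := by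
    intro s hs t ht hst
    have hs' : s ∈ Icc (0 : ℝ) (1 / 2) ∪ Icc (1 / 2) 1 := hu ▸ Ico_subset_Icc_self hs
    have ht' : t ∈ Icc (0 : ℝ) (1 / 2) ∪ Icc (1 / 2) 1 := hu ▸ Ico_subset_Icc_self ht
    rcases hs' with hs' | hs' <;> rcases ht' with ht' | ht'
    · have := hfi (m1 hs') (m1 ht') (by rw [h1 hs', h1 ht'] at hst; exact hst)
      dsimp only at this
      linarith
    · exact key s hs' t ht' ht.2.ne hst
    · exact (key t ht' s hs' hs.2.ne hst.symm).symm
    · have := hgi (m2 hs') (m2 ht') (by rw [h2 hs', h2 ht'] at hst; exact hst)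
      dsimp only at this
      linarith
  have hlc : Continuous (AddCircle.liftIco 1 0 h) :=
    AddCircle.liftIco_continuous (by simp [h0, hone]) (by simpa using hcont)
  have hrep : ∀ x : AddCircle (1 : ℝ), ∃ t ∈ Ico (0 : ℝ) 1, (t : AddCircle (1 : ℝ)) = x := by
    intro x
    have := AddCircle.coe_image_Ico_eq (p := (1 : ℝ)) 0
    have hx : x ∈ ((↑) : ℝ → AddCircle (1 : ℝ)) '' Ico 0 (0 + 1) := by rw [this]; trivial
    rw [zero_add] at hx
    exact hx
  have hlift : ∀ t ∈ Ico (0 : ℝ) 1, AddCircle.liftIco 1 0 h (t : AddCircle (1 : ℝ)) = h t :=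
    fun t ht => AddCircle.liftIco_coe_apply (by simpa using ht)
  have hli : Function.Injective (AddCircle.liftIco 1 0 h) := by
    intro x y hxy
    obtain ⟨s, hs, rfl⟩ := hrep x
    obtain ⟨t, ht, rfl⟩ := hrep y
    rw [hlift s hs, hlift t ht] at hxy
    rw [hinj hs ht hxy]
  have hrange : range (AddCircle.liftIco 1 0 h) = f '' Icc 0 1 ∪ g '' Icc 0 1 := by
    rw [← himg]
    apply subset_antisymm
    · rintro _ ⟨x, rfl⟩
      obtain ⟨s, hs, rfl⟩ := hrep x
      rw [hlift s hs]
      exact mem_image_of_mem _ (Ico_subset_Icc_self hs)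
    · rintro _ ⟨s, hs, rfl⟩
      rcases hs.2.eq_or_lt with rfl | hlt
      · refine ⟨((0 : ℝ) : AddCircle (1 : ℝ)), ?_⟩
        rw [hlift 0 (by simp), h0, hone]
      · exact ⟨_, hlift s ⟨hs.1, hlt⟩⟩
  have hemb : IsClosedEmbedding (AddCircle.liftIco 1 0 h) := hlc.isClosedEmbedding hli
  exact ⟨hemb.isEmbedding.toHomeomorph.trans (Homeomorph.setCongr hrange)⟩

end IsArc

/-- Two points of a Jordan curve split it into two arcs. -/
theorem IsJordanCurve.split {J : Set X} (hJ : IsJordanCurve J) {a b : X} (ha : a ∈ J) (hb : b ∈ J)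
    (hab : a ≠ b) : ∃ A B, IsArc A a b ∧ IsArc B a b ∧ A ∪ B = J ∧ A ∩ B ⊆ {a, b} := by
  obtain ⟨φ⟩ := hJ
  have : Fact (0 < (1 : ℝ)) := ⟨one_pos⟩
  set α := φ.symm ⟨a, ha⟩ with hα
  set F : ℝ → X := fun t => φ (α + (t : AddCircle (1 : ℝ))) with hF
  have hFc : Continuous F := by
    have : Continuous (fun t : ℝ => (t : AddCircle (1 : ℝ))) := AddCircle.continuous_mk' 1
    fun_prop
  have hrep : ∀ x : AddCircle (1 : ℝ), ∃ t ∈ Ico (0 : ℝ) 1, (t : AddCircle (1 : ℝ)) = x := by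
    intro x
    have := AddCircle.coe_image_Ico_eq (p := (1 : ℝ)) 0
    have hx : x ∈ ((↑) : ℝ → AddCircle (1 : ℝ)) '' Ico 0 (0 + 1) := by rw [this]; trivial
    rw [zero_add] at hx
    exact hx
  have hFi : ∀ s t, F s = F t → (s : AddCircle (1 : ℝ)) = t := by
    intro s t h
    exact add_left_cancel (φ.injective (Subtype.ext h))
  have hi1 : InjOn F (Ico 0 1) := fun s hs t ht h =>
    (AddCircle.coe_eq_coe_iff_of_mem_Ico (a := 0) (p := (1 : ℝ)) (by simpa using hs)
      (by simpa using ht)).1 (hFi s t h)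
  have hper : ∀ t, F (t + 1) = F t := by
    intro t
    simp [hF]
  have hi2 : InjOn F (Ioc 0 1) := by
    intro s hs t ht h
    have h1 : ∀ s ∈ Ioc (0 : ℝ) 1, ∀ t ∈ Ioc (0 : ℝ) 1, F s = F t → s = 1 → s = t := by
      rintro s hs t ht h rfl
      by_contra hne
      have ht' : t ∈ Ico (0 : ℝ) 1 := ⟨ht.1.le, ht.2.lt_of_ne (Ne.symm hne)⟩
      have h3 : F 0 = F t := by rw [← h, ← hper 0, zero_add]
      have h4 := hi1 (by simp) ht' h3
      exact ht.1.ne h4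
    by_cases hs1 : s = 1
    · exact h1 s hs t ht h hs1
    · by_cases ht1 : t = 1
      · exact (h1 t ht s hs h.symm ht1).symm
      · exact hi1 ⟨hs.1.le, hs.2.lt_of_ne hs1⟩ ⟨ht.1.le, ht.2.lt_of_ne ht1⟩ h
  have hF0 : F 0 = a := by simp [hF, hα]
  have hF1 : F 1 = a := by rw [← hF0, ← hper 0, zero_add]
  obtain ⟨s, hs, hsb⟩ := hrep (φ.symm ⟨b, hb⟩ - α)
  have hFs : F s = b := by simp [hF, hsb]
  have hs0 : 0 < s := hs.1.lt_of_ne (by rintro rfl; exact hab (hF0.symm.trans hFs))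
  have hsub1 : Icc 0 s ⊆ Ico (0 : ℝ) 1 := fun t ht => ⟨ht.1, ht.2.trans_lt hs.2⟩
  have hsub2 : Icc s 1 ⊆ Ioc (0 : ℝ) 1 := fun t ht => ⟨hs0.trans_le ht.1, ht.2⟩
  have hA : IsArc (F '' Icc 0 s) a b := by
    have := IsArc.of_Icc hs0 hFc.continuousOn (hi1.mono hsub1)
    rwa [hF0, hFs] at this
  have hB : IsArc (F '' Icc s 1) b a := by
    have := IsArc.of_Icc hs.2 hFc.continuousOn (hi2.mono hsub2)
    rwa [hF1, hFs] at this
  refine ⟨_, _, hA, hB.symm, ?_, ?_⟩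
  · rw [← image_union, Icc_union_Icc_eq_Icc hs.1 hs.2.le]
    apply subset_antisymm
    · rintro _ ⟨t, -, rfl⟩
      exact (φ _).2
    · intro x hx
      obtain ⟨t, ht, htx⟩ := hrep (φ.symm ⟨x, hx⟩ - α)
      exact ⟨t, Ico_subset_Icc_self ht, by simp [hF, htx]⟩
  · rintro _ ⟨⟨t, ht, rfl⟩, ⟨u, hu, hut⟩⟩
    rcases hu.2.eq_or_lt with rfl | hu1
    · left
      rw [← hut, hF1]
    · have h1 : u = t := hi1 ⟨hs.1.trans hu.1, hu1⟩ (hsub1 ht) hut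
      right
      rw [mem_singleton_iff, ← hFs, le_antisymm ht.2 (h1 ▸ hu.1)]

end Arc

section PathToArc

open Filter Topology

variable {X : Type} [MetricSpace X]

/-- A closed subset of `[0, 1]` containing both endpoints such that `γ` takes the same value at the
two ends of each complementary interval. -/
def GapFree (γ : ℝ → X) (K : Set ℝ) : Prop :=
  IsClosed K ∧ K ⊆ Icc 0 1 ∧ (0 : ℝ) ∈ K ∧ (1 : ℝ) ∈ K ∧
    ∀ s ∈ K, ∀ t ∈ K, s < t → Ioo s t ∩ K = ∅ → γ s = γ t

theorem exists_gap_around {K : Set ℝ} (hK : IsClosed K) (hsub : K ⊆ Icc 0 1) {s t s' t' : ℝ}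
    (hs : s ∈ K) (ht : t ∈ K) (hss : s < s') (hst : s' ≤ t') (htt : t' < t)
    (hd : Icc s' t' ∩ K = ∅) :
    ∃ u ∈ K, ∃ v ∈ K, s ≤ u ∧ u < s' ∧ t' < v ∧ v ≤ t ∧ Ioo u v ∩ K = ∅ := by
  have hdis : ∀ x ∈ K, s' ≤ x → x ≤ t' → False := fun x hx h1 h2 => by
    have : x ∈ Icc s' t' ∩ K := ⟨⟨h1, h2⟩, hx⟩
    rw [hd] at this
    exact this
  have c1 : IsClosed (K ∩ Iic s') := hK.inter isClosed_Iic
  have c2 : IsClosed (K ∩ Ici t') := hK.inter isClosed_Ici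
  have b1 : BddAbove (K ∩ Iic s') := ⟨1, fun x hx => (hsub hx.1).2⟩
  have b2 : BddBelow (K ∩ Ici t') := ⟨0, fun x hx => (hsub hx.1).1⟩
  have n1 : s ∈ K ∩ Iic s' := ⟨hs, hss.le⟩
  have n2 : t ∈ K ∩ Ici t' := ⟨ht, htt.le⟩
  have m1 := c1.csSup_mem ⟨s, n1⟩ b1
  have m2 := c2.csInf_mem ⟨t, n2⟩ b2
  refine ⟨_, m1.1, _, m2.1, le_csSup b1 n1, ?_, ?_, csInf_le b2 n2, ?_⟩
  · exact lt_of_le_of_ne m1.2 fun h => hdis s' (h ▸ m1.1) le_rfl hst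
  · exact lt_of_le_of_ne m2.2 fun h => hdis t' (h ▸ m2.1) hst le_rfl
  · rw [eq_empty_iff_forall_notMem]
    rintro x ⟨⟨hx1, hx2⟩, hxK⟩
    rcases le_or_gt x s' with h | h
    · exact absurd (le_csSup b1 ⟨hxK, h⟩) (not_le.2 hx1)
    · rcases le_or_gt t' x with h' | h'
      · exact absurd (csInf_le b2 ⟨hxK, h'⟩) (not_le.2 hx2)
      · exact hdis x hxK h.le h'.le

theorem GapFree.sInter {γ : ℝ → X} (hγ : ContinuousOn γ (Icc 0 1)) {c : Set (Set ℝ)}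
    (hc : ∀ K ∈ c, GapFree γ K) (hchain : IsChain (· ⊆ ·) c) (hne : c.Nonempty) :
    GapFree γ (⋂₀ c) := by
  obtain ⟨K₀, hK₀⟩ := hne
  refine ⟨isClosed_sInter fun K hK => (hc K hK).1, (sInter_subset_of_mem hK₀).trans (hc K₀ hK₀).2.1,
    fun K hK => (hc K hK).2.2.1, fun K hK => (hc K hK).2.2.2.1, ?_⟩
  intro s hs t ht hst hgap
  have hs01 := (hc K₀ hK₀).2.1 (hs K₀ hK₀)
  have ht01 := (hc K₀ hK₀).2.1 (ht K₀ hK₀)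
  by_contra hne
  have hpos : 0 < dist (γ s) (γ t) := dist_pos.2 hne
  have huc := isCompact_Icc.uniformContinuousOn_of_continuous hγ
  obtain ⟨δ, hδ, hδ'⟩ := Metric.uniformContinuousOn_iff.1 huc _ (half_pos hpos)
  set η := min (δ / 2) ((t - s) / 3) with hη
  have hη0 : 0 < η := lt_min (by positivity) (by linarith)
  have hη1 : η ≤ δ / 2 := min_le_left _ _
  have hη2 : η ≤ (t - s) / 3 := min_le_right _ _
  have hex : ∃ K ∈ c, Icc (s + η) (t - η) ∩ K = ∅ := by
    by_contra! hcon
    have hnon : (⋂₀ ((fun K => Icc (s + η) (t - η) ∩ K) '' c)).Nonempty := by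
      have : Nonempty ((fun K => Icc (s + η) (t - η) ∩ K) '' c) :=
        ⟨⟨_, mem_image_of_mem _ hK₀⟩⟩
      apply IsCompact.nonempty_sInter_of_directed_nonempty_isCompact_isClosed
      · rintro _ ⟨K, hK, rfl⟩ _ ⟨L, hL, rfl⟩
        rcases hchain.total hK hL with h | h
        · exact ⟨_, mem_image_of_mem _ hK, subset_rfl, inter_subset_inter_right _ h⟩
        · exact ⟨_, mem_image_of_mem _ hL, inter_subset_inter_right _ h, subset_rfl⟩
      · rintro _ ⟨K, hK, rfl⟩
        exact hcon K hK
      · rintro _ ⟨K, hK, rfl⟩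
        exact isCompact_Icc.inter_right (hc K hK).1
      · rintro _ ⟨K, hK, rfl⟩
        exact isClosed_Icc.inter (hc K hK).1
    obtain ⟨x, hx⟩ := hnon
    have hx0 := hx _ (mem_image_of_mem _ hK₀)
    have : x ∈ Ioo s t ∩ ⋂₀ c :=
      ⟨⟨by linarith [hx0.1.1], by linarith [hx0.1.2]⟩, fun K hK => (hx _ (mem_image_of_mem _ hK)).2⟩
    rw [hgap] at this
    exact this
  obtain ⟨K, hK, hKd⟩ := hex
  obtain ⟨u, hu, v, hv, hsu, hus, htv, hvt, huv⟩ := exists_gap_around (hc K hK).1 (hc K hK).2.1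
    (hs K hK) (ht K hK) (by linarith) (by linarith) (by linarith) hKd
  have huv' : γ u = γ v := (hc K hK).2.2.2.2 u hu v hv (by linarith) huv
  have d1 := hδ' s hs01 u ((hc K hK).2.1 hu) (by
    rw [Real.dist_eq, abs_lt]; constructor <;> linarith)
  have d2 := hδ' v ((hc K hK).2.1 hv) t ht01 (by
    rw [Real.dist_eq, abs_lt]; constructor <;> linarith)
  have := dist_triangle (γ s) (γ u) (γ t)
  rw [huv'] at d1 this
  linarith

theorem exists_minimal_gapFree {γ : ℝ → X} (hγ : ContinuousOn γ (Icc 0 1)) :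
    ∃ K, GapFree γ K ∧ ∀ s ∈ K, ∀ t ∈ K, s < t → γ s = γ t → Ioo s t ∩ K = ∅ := by
  have hI : GapFree γ (Icc 0 1) := by
    refine ⟨isClosed_Icc, subset_rfl, by simp, by simp, fun s hs t ht hst h => ?_⟩
    have : (s + t) / 2 ∈ Ioo s t ∩ Icc (0 : ℝ) 1 :=
      ⟨⟨by linarith, by linarith⟩, by linarith [hs.1, ht.1], by linarith [hs.2, ht.2]⟩
    rw [h] at this
    exact this.elim
  obtain ⟨K, -, hK, hmin⟩ := zorn_superset_nonempty {K | GapFree γ K}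
    (fun c hc hch hne => ⟨⋂₀ c, GapFree.sInter hγ hc hch hne,
      fun K hK => sInter_subset_of_mem hK⟩) (Icc 0 1) hI
  refine ⟨K, hK, fun s hs t ht hst hγst => ?_⟩
  have hK' : GapFree γ (K \ Ioo s t) := by
    refine ⟨hK.1.sdiff isOpen_Ioo, sdiff_subset.trans hK.2.1, ⟨hK.2.2.1, ?_⟩, ⟨hK.2.2.2.1, ?_⟩, ?_⟩
    · intro h
      exact absurd (hK.2.1 hs).1 (not_le.2 h.1)
    · intro h
      exact absurd (hK.2.1 ht).2 (not_le.2 h.2)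
    · rintro u ⟨hu, hu'⟩ v ⟨hv, hv'⟩ huv hgap
      by_cases he : Ioo u v ∩ K = ∅
      · exact hK.2.2.2.2 u hu v hv huv he
      · obtain ⟨w, hw, hwK⟩ := nonempty_iff_ne_empty.2 he
        have hgap' : ∀ x ∈ K, u < x → x < v → s < x ∧ x < t := by
          intro x hx h1 h2
          by_contra hcon
          have : x ∈ Ioo u v ∩ (K \ Ioo s t) := ⟨⟨h1, h2⟩, hx, hcon⟩
          rw [hgap] at this
          exact this
        have hwst := hgap' w hwK hw.1 hw.2
        have hus : u ≤ s := by
          by_contra hcon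
          exact hu' ⟨not_le.1 hcon, hw.1.trans hwst.2⟩
        have hvt : t ≤ v := by
          by_contra hcon
          exact hv' ⟨hwst.1.trans hw.2, not_le.1 hcon⟩
        have h1 : u = s := by
          by_contra hne
          exact lt_irrefl s (hgap' s hs (lt_of_le_of_ne hus hne) (hst.trans_le hvt)).1
        have h2 : v = t := by
          by_contra hne
          exact lt_irrefl t
            (hgap' t ht (hus.trans_lt hst) (lt_of_le_of_ne hvt (Ne.symm hne))).2
        rw [h1, h2, hγst]
  rw [eq_empty_iff_forall_notMem]
  rintro x ⟨hx, hxK⟩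
  exact (hmin hK' sdiff_subset hxK).2 hx

/-- A continuous function on `K` that separates exactly the points separated by `γ`. -/
theorem exists_monotone_parameter {γ : ℝ → X} (hγ : Continuous γ) {K : Set ℝ}
    (hK : GapFree γ K) (hmin : ∀ s ∈ K, ∀ t ∈ K, s < t → γ s = γ t → Ioo s t ∩ K = ∅) :
    ∃ w : ℝ → ℝ, ContinuousOn w K ∧ MonotoneOn w K ∧
      ∀ s ∈ K, ∀ t ∈ K, w s = w t ↔ γ s = γ t := by
  set L : ℝ → Set X := fun t => γ '' (K ∩ Iic t) with hL
  have hLmono : ∀ s t, s ≤ t → L s ⊆ L t := fun s t h =>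
    image_mono (inter_subset_inter_right _ (Iic_subset_Iic.2 h))
  have hLmem : ∀ t ∈ K, γ t ∈ L t := fun t ht => mem_image_of_mem _ ⟨ht, self_mem_Iic⟩
  have hLc : ∀ t, IsCompact (L t) := fun t =>
    ((isCompact_Icc.of_isClosed_subset hK.1 hK.2.1).inter_right isClosed_Iic).image hγ
  set q := TopologicalSpace.denseSeq ℝ
  set φ : ℕ → ℝ → ℝ := fun n t => min 1 (infDist (γ (q n)) (L t)) with hφ
  have hφ0 : ∀ n t, 0 ≤ φ n t := fun n t => le_min zero_le_one infDist_nonneg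
  have hφ1 : ∀ n t, φ n t ≤ 1 := fun n t => min_le_left _ _
  have hanti : ∀ n, ∀ s ∈ K, ∀ t, s ≤ t → φ n t ≤ φ n s := fun n s hs t hst =>
    min_le_min_left _ (infDist_le_infDist_of_subset (hLmono s t hst) ⟨_, hLmem s hs⟩)
  have hcont : ∀ n, ContinuousOn (φ n) K := by
    intro n
    refine ContinuousOn.inf continuousOn_const ?_
    refine Metric.continuousOn_iff.2 fun t ht ε hε => ?_
    obtain ⟨δ, hδ, hδ'⟩ := Metric.uniformContinuousOn_iff.1
      (isCompact_Icc.uniformContinuousOn_of_continuous (hγ.continuousOn (s := Icc 0 1))) _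
      (half_pos hε)
    have key : ∀ s ∈ K, ∀ t ∈ K, s ≤ t → dist s t < δ →
        infDist (γ (q n)) (L s) ≤ infDist (γ (q n)) (L t) + ε / 2 := by
      intro s hs t ht hst hd
      rw [← sub_le_iff_le_add, le_infDist ⟨_, hLmem t ht⟩]
      rintro _ ⟨r, ⟨hrK, hrt⟩, rfl⟩
      rcases le_or_gt r s with h | h
      · have := infDist_le_dist_of_mem (x := γ (q n)) (mem_image_of_mem γ ⟨hrK, h⟩ : γ r ∈ L s)
        linarith
      · have h1 := infDist_le_dist_of_mem (x := γ (q n)) (hLmem s hs)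
        have h2 := hδ' r (hK.2.1 hrK) s (hK.2.1 hs) (by
          rw [Real.dist_eq, abs_sub_comm, abs_of_nonneg (by linarith)] at hd
          rw [Real.dist_eq, abs_of_pos (by linarith)]
          have : r ≤ t := hrt
          linarith)
        have h3 := dist_triangle (γ (q n)) (γ r) (γ s)
        linarith
    have hmono : ∀ s ∈ K, ∀ t, s ≤ t → infDist (γ (q n)) (L t) ≤ infDist (γ (q n)) (L s) :=
      fun s hs t hst => infDist_le_infDist_of_subset (hLmono s t hst) ⟨_, hLmem s hs⟩
    refine ⟨δ, hδ, fun s hs hst => ?_⟩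
    rw [Real.dist_eq, abs_lt]
    rcases le_total s t with h | h
    · have := key s hs t ht h hst
      have := hmono s hs t h
      constructor <;> linarith
    · have := key t ht s hs h (by rwa [dist_comm])
      have := hmono t ht s h
      constructor <;> linarith
  have hgeo : Summable fun n : ℕ => (1 / 2 : ℝ) ^ n :=
    summable_geometric_of_lt_one (by norm_num) (by norm_num)
  have hsum : ∀ t, Summable fun n => (1 / 2 : ℝ) ^ n * φ n t := fun t =>
    hgeo.of_nonneg_of_le (fun n => mul_nonneg (by positivity) (hφ0 n t))
      (fun n => mul_le_of_le_one_right (by positivity) (hφ1 n t))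
  set W : ℝ → ℝ := fun t => ∑' n, (1 / 2 : ℝ) ^ n * φ n t with hW
  have hWanti : ∀ s ∈ K, ∀ t, s ≤ t → W t ≤ W s := fun s hs t hst =>
    (hsum t).tsum_le_tsum (fun n => mul_le_mul_of_nonneg_left (hanti n s hs t hst) (by positivity))
      (hsum s)
  have hstrict : ∀ s ∈ K, ∀ t ∈ K, s < t → γ s ≠ γ t → W t < W s := by
    intro s hs t ht hst hne
    have hnot : γ t ∉ L s := by
      rintro ⟨r, ⟨hrK, hrs⟩, hrt⟩
      have hrs' : r ≤ s := hrs
      have := hmin r hrK t ht (hrs'.trans_lt hst) hrt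
      rcases hrs'.eq_or_lt with rfl | hlt
      · exact hne hrt
      · have hmem : s ∈ Ioo r t ∩ K := ⟨⟨hlt, hst⟩, hs⟩
        rw [this] at hmem
        exact hmem
    have hpos : 0 < infDist (γ t) (L s) :=
      ((hLc s).isClosed.notMem_iff_infDist_pos ⟨_, hLmem s hs⟩).1 hnot
    set ρ := min 1 (infDist (γ t) (L s) / 2) with hρ
    have hρ0 : 0 < ρ := lt_min one_pos (by positivity)
    obtain ⟨_, hn, n, rfl⟩ := (TopologicalSpace.denseRange_denseSeq ℝ).inter_open_nonempty
      (γ ⁻¹' ball (γ t) ρ) (isOpen_ball.preimage hγ) ⟨t, mem_ball_self hρ0⟩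
    have hn' : dist (γ (q n)) (γ t) < ρ := hn
    refine (hsum t).tsum_lt_tsum (i := n)
      (fun n => mul_le_mul_of_nonneg_left (hanti n s hs t hst.le) (by positivity)) ?_ (hsum s)
    refine mul_lt_mul_of_pos_left ?_ (by positivity)
    have h1 : infDist (γ (q n)) (L t) ≤ dist (γ (q n)) (γ t) :=
      infDist_le_dist_of_mem (hLmem t ht)
    have h2 : infDist (γ t) (L s) ≤ infDist (γ (q n)) (L s) + dist (γ t) (γ (q n)) :=
      infDist_le_infDist_add_dist
    rw [dist_comm] at h2
    have h3 : ρ ≤ infDist (γ t) (L s) / 2 := min_le_right _ _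
    have h4 : ρ ≤ 1 := min_le_left _ _
    exact (min_le_right _ _).trans_lt (lt_min (by linarith) (by linarith))
  have heqLt : ∀ s ∈ K, ∀ t ∈ K, s < t → γ s = γ t → W s = W t := by
    intro s hs t ht hst h
    have hgap := hmin s hs t ht hst h
    have : L s = L t := by
      refine subset_antisymm (hLmono s t hst.le) ?_
      rintro _ ⟨r, ⟨hrK, hrt⟩, rfl⟩
      rcases le_or_gt r s with hrs | hrs
      · exact mem_image_of_mem _ ⟨hrK, hrs⟩
      · rcases (show r ≤ t from hrt).eq_or_lt with rfl | hlt
        · rw [← h]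
          exact hLmem s hs
        · have hmem : r ∈ Ioo s t ∩ K := ⟨⟨hrs, hlt⟩, hrK⟩
          rw [hgap] at hmem
          exact hmem.elim
    simp only [hW, hφ, this]
  refine ⟨fun t => - W t, ?_, fun s hs t ht hst => neg_le_neg (hWanti s hs t hst), ?_⟩
  · refine ContinuousOn.neg (continuousOn_tsum (fun n => continuousOn_const.mul (hcont n)) hgeo ?_)
    intro n t _
    rw [Real.norm_of_nonneg (mul_nonneg (by positivity) (hφ0 n t))]
    exact mul_le_of_le_one_right (by positivity) (hφ1 n t)
  · intro s hs t ht
    rw [neg_inj]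
    rcases lt_trichotomy s t with h | rfl | h
    · refine ⟨fun hw => ?_, heqLt s hs t ht h⟩
      by_contra hne
      exact (hstrict s hs t ht h hne).ne' hw
    · simp
    · refine ⟨fun hw => ?_, fun hγ => (heqLt t ht s hs h hγ.symm).symm⟩
      by_contra hne
      exact (hstrict t ht s hs h (Ne.symm hne)).ne hw

/-- A path joining two distinct points contains an arc joining them. -/
theorem JoinedIn.exists_isArc {S : Set X} {a b : X} (h : JoinedIn S a b) (hab : a ≠ b) :
    ∃ A ⊆ S, IsArc A a b := by
  obtain ⟨p, hp⟩ := h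
  set γ : ℝ → X := fun t => p.extend t with hγdef
  have hγ : Continuous γ := map_continuous p.extend
  have hγ0 : γ 0 = a := p.extend_zero
  have hγ1 : γ 1 = b := p.extend_one
  have hγS : ∀ t ∈ Icc (0 : ℝ) 1, γ t ∈ S := fun t ht => by
    change p.extend t ∈ S
    rw [p.extend_apply ht]
    exact hp _
  obtain ⟨K, hK, hmin⟩ := exists_minimal_gapFree hγ.continuousOn
  obtain ⟨w, hwc, hwm, hw⟩ := exists_monotone_parameter hγ hK hmin
  have hKc : IsCompact K := isCompact_Icc.of_isClosed_subset hK.1 hK.2.1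
  have hw01 : w 0 < w 1 := by
    refine lt_of_le_of_ne (hwm hK.2.2.1 hK.2.2.2.1 zero_le_one) fun h => hab ?_
    rw [← hγ0, ← hγ1]
    exact (hw 0 hK.2.2.1 1 hK.2.2.2.1).1 h
  have hmaps : MapsTo w K (Icc (w 0) (w 1)) := fun t ht =>
    ⟨hwm hK.2.2.1 ht (hK.2.1 ht).1, hwm ht hK.2.2.2.1 (hK.2.1 ht).2⟩
  have hsurj : ∀ c ∈ Icc (w 0) (w 1), ∃ t ∈ K, w t = c := by
    intro c hc
    have c1 : IsClosed (K ∩ w ⁻¹' Iic c) := hwc.preimage_isClosed_of_isClosed hK.1 isClosed_Iic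
    have c2 : IsClosed (K ∩ w ⁻¹' Ici c) := hwc.preimage_isClosed_of_isClosed hK.1 isClosed_Ici
    have b1 : BddAbove (K ∩ w ⁻¹' Iic c) := ⟨1, fun x hx => (hK.2.1 hx.1).2⟩
    have b2 : BddBelow (K ∩ w ⁻¹' Ici c) := ⟨0, fun x hx => (hK.2.1 hx.1).1⟩
    have m1 := c1.csSup_mem ⟨0, hK.2.2.1, hc.1⟩ b1
    have m2 := c2.csInf_mem ⟨1, hK.2.2.2.1, hc.2⟩ b2
    set s := sSup (K ∩ w ⁻¹' Iic c)
    set t := sInf (K ∩ w ⁻¹' Ici c)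
    have hs : w s ≤ c := m1.2
    have ht : c ≤ w t := m2.2
    by_cases hst : s < t
    · have hgap : Ioo s t ∩ K = ∅ := by
        rw [eq_empty_iff_forall_notMem]
        rintro x ⟨⟨hx1, hx2⟩, hxK⟩
        rcases le_total (w x) c with h | h
        · exact absurd (le_csSup b1 ⟨hxK, h⟩) (not_le.2 hx1)
        · exact absurd (csInf_le b2 ⟨hxK, h⟩) (not_le.2 hx2)
      have h1 := (hw s m1.1 t m2.1).2 (hK.2.2.2.2 s m1.1 t m2.1 hst hgap)
      exact ⟨s, m1.1, le_antisymm hs (ht.trans h1.ge)⟩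
    · have h1 := hwm m2.1 m1.1 (not_lt.1 hst)
      exact ⟨s, m1.1, le_antisymm hs (ht.trans h1)⟩
  have : CompactSpace K := isCompact_iff_compactSpace.1 hKc
  let wK : K → Icc (w 0) (w 1) := hmaps.restrict
  have hwK : Continuous wK := hwc.mapsToRestrict hmaps
  have hwKs : Function.Surjective wK := by
    rintro ⟨c, hc⟩
    obtain ⟨t, ht, rfl⟩ := hsurj c hc
    exact ⟨⟨t, ht⟩, rfl⟩
  choose! σ hσK hσ using hsurj
  set f : ℝ → X := fun c => γ (σ c) with hf
  have hfw : ∀ t ∈ K, f (w t) = γ t := fun t ht =>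
    (hw _ (hσK _ (hmaps ht)) _ ht).1 (hσ _ (hmaps ht))
  have hfc : ContinuousOn f (Icc (w 0) (w 1)) := by
    rw [continuousOn_iff_continuous_domRestrict]
    have hq : IsQuotientMap wK := hwK.isClosedMap.isQuotientMap hwK hwKs
    rw [hq.continuous_iff]
    have : (Icc (w 0) (w 1)).domRestrict f ∘ wK = fun t : K => γ t := by
      ext t
      exact hfw t t.2
    rw [this]
    exact hγ.comp continuous_subtype_val
  have hfi : InjOn f (Icc (w 0) (w 1)) := by
    intro c hc d hd hcd
    rw [← hσ c hc, ← hσ d hd]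
    exact (hw _ (hσK c hc) _ (hσK d hd)).2 hcd
  refine ⟨f '' Icc (w 0) (w 1), ?_, ?_⟩
  · rintro _ ⟨c, hc, rfl⟩
    exact hγS _ (hK.2.1 (hσK c hc))
  · have := IsArc.of_Icc hw01 hfc hfi
    rwa [hfw 0 hK.2.2.1, hfw 1 hK.2.2.2.1, hγ0, hγ1] at this

end PathToArc

section CyclicElements

open Filter Topology

variable {X : Type} [MetricSpace X] {A P T W : Set X} {a b x y : X}

theorem IsArc.exists_ne_ends (h : IsArc A a b) : ∃ c ∈ A, c ≠ a ∧ c ≠ b := by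
  obtain ⟨f, -, hi, rfl, rfl, rfl⟩ := h
  have h0 : (0 : ℝ) ∈ Icc (0 : ℝ) 1 := by norm_num
  have h1 : (1 : ℝ) ∈ Icc (0 : ℝ) 1 := by norm_num
  have h2 : (1 / 2 : ℝ) ∈ Icc (0 : ℝ) 1 := by norm_num
  refine ⟨f (1 / 2), mem_image_of_mem _ h2, fun h => ?_, fun h => ?_⟩
  · have := hi h2 h0 h
    norm_num at this
  · have := hi h2 h1 h
    norm_num at this

theorem IsJordanCurve.isClosed {J : Set X} (hJ : IsJordanCurve J) : IsClosed J := by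
  obtain ⟨e⟩ := hJ
  have : CompactSpace J := e.compactSpace
  exact (isCompact_iff_compactSpace.2 this).isClosed

theorem IsJordanCurve.cyclicallyConnected {J : Set X} (hJ : IsJordanCurve J) :
    CyclicallyConnected J :=
  fun _ hx _ hy => ⟨J, subset_rfl, hJ, hx, hy⟩

theorem CyclicallyConnected.exists_isArc (hT : CyclicallyConnected T) (ha : a ∈ T) (hb : b ∈ T)
    (hab : a ≠ b) : ∃ B ⊆ T, IsArc B a b := by
  obtain ⟨J, hJT, hJ, haJ, hbJ⟩ := hT a ha b hb
  obtain ⟨A, B, hA, -, hAB, -⟩ := hJ.split haJ hbJ hab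
  exact ⟨A, (subset_union_left.trans hAB.subset).trans hJT, hA⟩

theorem IsJordanCurve.exists_isArc_mem {J : Set X} (hJ : IsJordanCurve J) (ha : a ∈ J) (hb : b ∈ J)
    (hy : y ∈ J) (hab : a ≠ b) : ∃ B ⊆ J, IsArc B a b ∧ y ∈ B := by
  obtain ⟨A, B, hA, hB, rfl, -⟩ := hJ.split ha hb hab
  rcases hy with hy | hy
  · exact ⟨A, subset_union_left, hA, hy⟩
  · exact ⟨B, subset_union_right, hB, hy⟩

/-- In a cyclicly connected set, any two points are joined by an arc through a given third point. -/
theorem CyclicallyConnected.exists_isArc_mem (hT : CyclicallyConnected T) (ha : a ∈ T)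
    (hb : b ∈ T) (hy : y ∈ T) (hab : a ≠ b) : ∃ B ⊆ T, IsArc B a b ∧ y ∈ B := by
  by_cases hya : y = a
  · obtain ⟨B, hBT, hB⟩ := hT.exists_isArc ha hb hab
    exact ⟨B, hBT, hB, hya ▸ hB.left_mem⟩
  by_cases hyb : y = b
  · obtain ⟨B, hBT, hB⟩ := hT.exists_isArc ha hb hab
    exact ⟨B, hBT, hB, hyb ▸ hB.right_mem⟩
  obtain ⟨J, hJT, hJ, haJ, hyJ⟩ := hT a ha y hy
  by_cases hbJ : b ∈ J
  · obtain ⟨B, hBJ, hB, hyB⟩ := hJ.exists_isArc_mem haJ hbJ hyJ hab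
    exact ⟨B, hBJ.trans hJT, hB, hyB⟩
  obtain ⟨J', hJT', hJ', hbJ', hyJ'⟩ := hT b hb y hy
  obtain ⟨A₁, A₂, h₁, h₂, rfl, h₁₂⟩ := hJ'.split hbJ' hyJ' (Ne.symm hyb)
  obtain ⟨p₁, hp₁, B₁, hB₁, hB₁', hB₁J⟩ :=
    h₁.exists_first_hit hJ.isClosed hbJ ⟨y, h₁.right_mem, hyJ⟩
  obtain ⟨p₂, hp₂, B₂, hB₂, hB₂', hB₂J⟩ :=
    h₂.exists_first_hit hJ.isClosed hbJ ⟨y, h₂.right_mem, hyJ⟩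
  have key : ∃ p ∈ J, p ≠ a ∧ ∃ B ⊆ T, IsArc B b p ∧ B ∩ J = {p} := by
    by_cases h : p₁ = a
    · refine ⟨p₂, hp₂, fun h' => ?_, B₂, hB₂.trans (subset_union_right.trans hJT'), hB₂', hB₂J⟩
      rcases h₁₂ ⟨hB₁ (h ▸ hB₁'.right_mem), hB₂ (h' ▸ hB₂'.right_mem)⟩ with h | h
      · exact hab h
      · exact hya h.symm
    · exact ⟨p₁, hp₁, h, B₁, hB₁.trans (subset_union_left.trans hJT'), hB₁', hB₁J⟩
  obtain ⟨p, hpJ, hpa, B, hBT, hB, hBJ⟩ := key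
  obtain ⟨C, hCJ, hC, hyC⟩ := hJ.exists_isArc_mem haJ hpJ hyJ hpa.symm
  refine ⟨C ∪ B, union_subset (hCJ.trans hJT) hBT, hC.union hB.symm ?_, Or.inl hyC⟩
  rw [← hBJ, inter_comm]
  exact inter_subset_inter_right _ hCJ

theorem CyclicallyConnected.joinedIn (hT : CyclicallyConnected T) (ha : a ∈ T) (hb : b ∈ T) :
    JoinedIn T a b := by
  by_cases hab : a = b
  · exact hab ▸ JoinedIn.refl ha
  · obtain ⟨B, hBT, hB⟩ := hT.exists_isArc ha hb hab
    exact hB.joinedIn.mono hBT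

/-- Adding an arc that meets a cyclicly connected set exactly in its ends keeps it cyclicly
connected. -/
theorem CyclicallyConnected.union_isArc (hT : CyclicallyConnected T) (ha : a ∈ T) (hb : b ∈ T)
    (hA : IsArc A a b) (hAT : A ∩ T ⊆ {a, b}) : CyclicallyConnected (T ∪ A) := by
  have key : ∀ y ∈ T, ∃ J ⊆ T ∪ A, IsJordanCurve J ∧ A ⊆ J ∧ y ∈ J := by
    intro y hy
    obtain ⟨B, hBT, hB, hyB⟩ := hT.exists_isArc_mem ha hb hy hA.ne
    exact ⟨A ∪ B, union_subset subset_union_right (hBT.trans subset_union_left),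
      hA.isJordanCurve_union hB ((inter_subset_inter_right _ hBT).trans hAT),
      subset_union_left, Or.inr hyB⟩
  rintro x (hx | hx) y (hy | hy)
  · obtain ⟨J, hJT, hJ⟩ := hT x hx y hy
    exact ⟨J, hJT.trans subset_union_left, hJ⟩
  · obtain ⟨J, hJT, hJ, hAJ, hxJ⟩ := key x hx
    exact ⟨J, hJT, hJ, hxJ, hAJ hy⟩
  · obtain ⟨J, hJT, hJ, hAJ, hyJ⟩ := key y hy
    exact ⟨J, hJT, hJ, hAJ hx, hyJ⟩
  · obtain ⟨J, hJT, hJ, hAJ, -⟩ := key a ha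
    exact ⟨J, hJT, hJ, hAJ hx, hAJ hy⟩

theorem CyclicallyConnected.exists_maximalCyclic (hT : CyclicallyConnected T)
    (hne : ¬ T.Subsingleton) : ∃ S, MaximalCyclic S ∧ T ⊆ S := by
  obtain ⟨S, hTS, hS, hmax⟩ := zorn_subset_nonempty {C : Set X | CyclicallyConnected C}
    (fun c hc hch _ => ⟨⋃₀ c, fun x hx y hy => by
      obtain ⟨C, hC, hxC⟩ := hx
      obtain ⟨D, hD, hyD⟩ := hy
      obtain ⟨E, hE, hxE, hyE⟩ : ∃ E ∈ c, x ∈ E ∧ y ∈ E := by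
        rcases hch.total hC hD with h | h
        · exact ⟨D, hD, h hxC, hyD⟩
        · exact ⟨C, hC, hxC, h hyD⟩
      obtain ⟨J, hJE, hJ⟩ := hc hE x hxE y hyE
      exact ⟨J, hJE.trans (subset_sUnion_of_mem hE), hJ⟩,
      fun C hC => subset_sUnion_of_mem hC⟩) T hT
  exact ⟨S, ⟨fun h => hne (h.anti hTS), hS, fun C hC hSC => (hmax hC hSC).antisymm hSC⟩, hTS⟩

/-- No arc joins two points of `P` through the complement of `P`. -/
def NoChord (P : Set X) : Prop :=
  ∀ u ∈ P, ∀ v ∈ P, ∀ A : Set X, IsArc A u v → ¬ A ∩ P ⊆ {u, v}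

theorem MaximalCyclic.noChord (hT : MaximalCyclic T) : NoChord T := by
  intro u hu v hv A hA hAT
  have h := hT.2.2 _ (hT.2.1.union_isArc hu hv hA hAT) subset_union_left
  obtain ⟨c, hc, hcu, hcv⟩ := hA.exists_ne_ends
  rcases hAT ⟨hc, h ▸ Or.inr hc⟩ with h | h
  · exact hcu h
  · exact hcv h

/-- A cyclicly connected set meeting a closed chordless set in two points is contained in it. -/
theorem NoChord.subset_of_cyclicallyConnected (hP : NoChord P) (hPc : IsClosed P)
    (hT : CyclicallyConnected T) (ha : a ∈ T ∩ P) (hb : b ∈ T ∩ P) (hab : a ≠ b) : T ⊆ P := by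
  intro x hx
  by_contra hxP
  obtain ⟨B, -, hB, hxB⟩ := hT.exists_isArc_mem ha.1 hb.1 hx hab
  obtain ⟨A₁, A₂, h₁, h₂, -, h₁₂⟩ := hB.split hxB (fun h => hxP (h ▸ ha.2))
    (fun h => hxP (h ▸ hb.2))
  obtain ⟨p, hp, B₁, hB₁, hB₁', hB₁P⟩ :=
    h₁.symm.exists_first_hit hPc hxP ⟨a, h₁.left_mem, ha.2⟩
  obtain ⟨q, hq, B₂, hB₂, hB₂', hB₂P⟩ :=
    h₂.exists_first_hit hPc hxP ⟨b, h₂.right_mem, hb.2⟩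
  refine hP p hp q hq _ (hB₁'.symm.union hB₂' ((inter_subset_inter hB₁ hB₂).trans h₁₂.subset)) ?_
  rw [union_inter_distrib_right, hB₁P, hB₂P]
  rfl

theorem MaximalCyclic.inter_subsingleton {S : Set X} (hS : MaximalCyclic S) (hSc : IsClosed S)
    (hT : MaximalCyclic T) (hne : S ≠ T) : (T ∩ S).Subsingleton := by
  intro a ha b hb
  by_contra hab
  exact hne (hT.2.2 S hS.2.1
    (hS.noChord.subset_of_cyclicallyConnected hSc hT.2.1 ha hb hab))

/-- A path ending in a closed set can be stopped at the first point of that set. -/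
theorem JoinedIn.exists_first_hit (h : JoinedIn W x y) (hP : IsClosed P) (hy : y ∈ P) :
    ∃ p ∈ P, p ∈ W ∧ JoinedIn (W ∩ (Pᶜ ∪ {p})) x p := by
  by_cases hx : x ∈ P
  · exact ⟨x, hx, h.source_mem, JoinedIn.refl ⟨h.source_mem, Or.inr rfl⟩⟩
  obtain ⟨A, hAW, hA⟩ := h.exists_isArc (fun hxy => hx (hxy ▸ hy))
  obtain ⟨p, hp, B, hBA, hB, hBP⟩ := hA.exists_first_hit hP hx ⟨y, hA.right_mem, hy⟩
  refine ⟨p, hp, hAW (hBA hB.right_mem), hB.joinedIn.mono fun z hz => ⟨hAW (hBA hz), ?_⟩⟩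
  by_cases hzP : z ∈ P
  · exact Or.inr (hBP ▸ ⟨hz, hzP⟩)
  · exact Or.inl hzP

end CyclicElements

section ChordlessRetraction

open Filter Topology

variable {X : Type} [MetricSpace X] {P Q S W : Set X} {p x y : X}

open Classical in
/-- The point of `P` at which paths from `x` to `P` arrive. -/
noncomputable def entryPoint (P : Set X) (x : X) : X :=
  if h : ∃ p ∈ P, JoinedIn (Pᶜ ∪ {p}) x p then h.choose else x

theorem entryPoint_spec [PathConnectedSpace X] (hP : IsClosed P) (hne : P.Nonempty) (x : X) :
    entryPoint P x ∈ P ∧ JoinedIn (Pᶜ ∪ {entryPoint P x}) x (entryPoint P x) := by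
  have h : ∃ p ∈ P, JoinedIn (Pᶜ ∪ {p}) x p := by
    obtain ⟨t, ht⟩ := hne
    obtain ⟨p, hp, -, h⟩ := JoinedIn.exists_first_hit
      (joinedIn_univ.2 (PathConnectedSpace.joined x t)) hP ht
    exact ⟨p, hp, h.mono inter_subset_right⟩
  rw [entryPoint, dif_pos h]
  exact h.choose_spec

theorem NoChord.entryPoint_eq (hP : NoChord P) (hp : p ∈ P) (h : JoinedIn (Pᶜ ∪ {p}) x p) :
    entryPoint P x = p := by
  have h' : ∃ p ∈ P, JoinedIn (Pᶜ ∪ {p}) x p := ⟨p, hp, h⟩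
  rw [entryPoint, dif_pos h']
  obtain ⟨hq, hxq⟩ := h'.choose_spec
  set q := h'.choose
  by_contra hqp
  obtain ⟨A, hA, hA'⟩ := ((hxq.symm.mono (union_subset_union_right Pᶜ (t₂ := {q, p})
    (by simp))).trans (h.mono (union_subset_union_right Pᶜ (by simp)))).exists_isArc hqp
  refine hP q hq p hp A hA' ?_
  rintro z ⟨hz, hzP⟩
  rcases hA hz with h | h
  · exact absurd hzP h
  · exact h

theorem NoChord.entryPoint_of_mem (hP : NoChord P) (hx : x ∈ P) : entryPoint P x = x :=
  hP.entryPoint_eq hx (JoinedIn.refl (Or.inr rfl))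

theorem NoChord.entryPoint_mem_of_joinedIn (hP : NoChord P) (hPc : IsClosed P)
    (h : JoinedIn W x y) (hy : y ∈ P) : entryPoint P x ∈ W := by
  obtain ⟨p, hp, hpW, h⟩ := h.exists_first_hit hPc hy
  rwa [hP.entryPoint_eq hp (h.mono inter_subset_right)]

theorem NoChord.entryPoint_eq_of_joinedIn [PathConnectedSpace X] (hP : NoChord P)
    (hPc : IsClosed P) (hne : P.Nonempty) (h : JoinedIn Pᶜ x y) :
    entryPoint P x = entryPoint P y :=
  hP.entryPoint_eq (entryPoint_spec hPc hne y).1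
    ((h.mono subset_union_left).trans (entryPoint_spec hPc hne y).2)

theorem NoChord.entryPoint_eq_of_subsingleton [PathConnectedSpace X] (hP : NoChord P)
    (hPc : IsClosed P) (hne : P.Nonempty) (hS : ∀ x ∈ S, ∀ y ∈ S, JoinedIn S x y)
    (hSP : (S ∩ P).Subsingleton) (hx : x ∈ S) (hy : y ∈ S) :
    entryPoint P x = entryPoint P y := by
  rcases (S ∩ P).eq_empty_or_nonempty with h | ⟨p, hpS, hpP⟩
  · refine hP.entryPoint_eq_of_joinedIn hPc hne ((hS x hx y hy).mono fun z hz hzP => ?_)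
    have : z ∈ S ∩ P := ⟨hz, hzP⟩
    rw [h] at this
    exact this
  · have hsub : S ⊆ Pᶜ ∪ {p} := fun z hz => by
      by_cases hzP : z ∈ P
      · exact Or.inr (hSP ⟨hz, hzP⟩ ⟨hpS, hpP⟩)
      · exact Or.inl hzP
    rw [hP.entryPoint_eq hpP ((hS x hx p hpS).mono hsub),
      hP.entryPoint_eq hpP ((hS y hy p hpS).mono hsub)]

theorem NoChord.continuous_entryPoint [PathConnectedSpace X] [LocallyPathConnectedSpace X]
    (hP : NoChord P) (hPc : IsClosed P) (hne : P.Nonempty) : Continuous (entryPoint P) := by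
  refine continuous_iff_continuousAt.2 fun x => ?_
  by_cases hx : x ∈ P
  · rw [ContinuousAt, hP.entryPoint_of_mem hx]
    refine ((isOpen_isPathConnected_basis x).tendsto_iff (isOpen_isPathConnected_basis x)).2 ?_
    rintro W ⟨hWo, hxW, hWp⟩
    exact ⟨W, ⟨hWo, hxW, hWp⟩, fun y hy =>
      hP.entryPoint_mem_of_joinedIn hPc (hWp.joinedIn y hy x hxW) hx⟩
  · have hmem : pathComponentIn Pᶜ x ∈ 𝓝 x :=
      pathComponentIn_mem_nhds (hPc.isOpen_compl.mem_nhds hx)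
    refine continuousAt_const.congr (f := fun _ => entryPoint P x) ?_
    filter_upwards [hmem] with y hy
    exact hP.entryPoint_eq_of_joinedIn hPc hne hy

theorem NoChord.entryPoint_entryPoint [PathConnectedSpace X] (hP : NoChord P) (hPc : IsClosed P)
    (hne : P.Nonempty) (hQc : IsClosed Q) (hPQ : P ⊆ Q) (x : X) :
    entryPoint P (entryPoint Q x) = entryPoint P x := by
  obtain ⟨hq, hxq⟩ := entryPoint_spec hQc (hne.mono hPQ) x
  set q := entryPoint Q x
  obtain ⟨hp, hqp⟩ := entryPoint_spec hPc hne q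
  set p := entryPoint P q with hpdef
  symm
  by_cases hqP : q ∈ P
  · have : p = q := hP.entryPoint_of_mem hqP
    rw [this]
    exact hP.entryPoint_eq hqP (hxq.mono (union_subset_union_left _ (compl_subset_compl.2 hPQ)))
  · refine hP.entryPoint_eq hp (JoinedIn.trans (hxq.mono ?_) hqp)
    rintro z (hz | rfl)
    · exact Or.inl fun h => hz (hPQ h)
    · exact Or.inl hqP

end ChordlessRetraction

section SmallCyclicElements

open Filter Topology

variable {X : Type} [MetricSpace X] {T : Set X}

/-- In a Peano space, only finitely many closed maximal cyclic subsets have diameter at least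
`ε`. -/
theorem finite_maximalCyclic_of_le_dist [CompactSpace X] [PathConnectedSpace X]
    [LocallyPathConnectedSpace X] (hcl : ∀ T : Set X, MaximalCyclic T → IsClosed T) {ε : ℝ}
    (hε : 0 < ε) : {T : Set X | MaximalCyclic T ∧ ∃ x ∈ T, ∃ y ∈ T, ε ≤ dist x y}.Finite := by
  by_contra hinf
  obtain ⟨T, hTinj, hT⟩ : ∃ T : ℕ → Set X, Function.Injective T ∧
      ∀ n, MaximalCyclic (T n) ∧ ∃ x ∈ T n, ∃ y ∈ T n, ε ≤ dist x y := by
    let f := Set.Infinite.natEmbedding _ hinf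
    exact ⟨fun n => f n, fun m n h => f.injective (Subtype.ext h), fun n => (f n).2⟩
  choose hTm x hx y hy hxy using hT
  obtain ⟨⟨a, b⟩, φ, hφ, hlim⟩ := CompactSpace.tendsto_subseq fun n => (x n, y n)
  have hxa : Tendsto (fun n => x (φ n)) atTop (𝓝 a) := (continuous_fst.tendsto _).comp hlim
  have hyb : Tendsto (fun n => y (φ n)) atTop (𝓝 b) := (continuous_snd.tendsto _).comp hlim
  have hab : ε ≤ dist a b := ge_of_tendsto' (hxa.dist hyb) fun n => hxy (φ n)
  obtain ⟨W, ⟨hWo, haW, hWp⟩, hW⟩ :=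
    (isOpen_isPathConnected_basis a).mem_iff.1 (ball_mem_nhds a (half_pos hε))
  obtain ⟨V, ⟨hVo, hbV, hVp⟩, hV⟩ :=
    (isOpen_isPathConnected_basis b).mem_iff.1 (ball_mem_nhds b (half_pos hε))
  obtain ⟨N, hN⟩ := eventually_atTop.1
    ((hxa.eventually (hWo.mem_nhds haW)).and (hyb.eventually (hVo.mem_nhds hbV)))
  obtain ⟨hi₁, hi₂⟩ := hN N le_rfl
  obtain ⟨hj₁, hj₂⟩ := hN (N + 1) (Nat.le_succ N)
  set i := φ N
  set j := φ (N + 1)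
  have hij : T i ≠ T j := fun h => (hφ (Nat.lt_succ_self N)).ne (hTinj h)
  have hch := (hTm i).noChord
  have h₁ := hch.entryPoint_mem_of_joinedIn (hcl _ (hTm i)) (hWp.joinedIn _ hj₁ _ hi₁) (hx i)
  have h₂ := hch.entryPoint_mem_of_joinedIn (hcl _ (hTm i)) (hVp.joinedIn _ hj₂ _ hi₂) (hy i)
  rw [hch.entryPoint_eq_of_subsingleton (hcl _ (hTm i)) ⟨_, hx i⟩
    (fun u hu v hv => (hTm j).2.1.joinedIn hu hv)
    ((hTm i).inter_subsingleton (hcl _ (hTm i)) (hTm j) hij) (hx j) (hy j)] at h₁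
  have d₁ := mem_ball'.1 (hW h₁)
  have d₂ := mem_ball.1 (hV h₂)
  have := dist_triangle a (entryPoint (T i) (y j)) b
  linarith

/-- In a compact ANR, sufficiently small retracts are contractible. -/
theorem IsANR.exists_contractible_of_small [CompactSpace X] (hX : IsANR X) :
    ∃ δ > 0, ∀ T : Set X, T.Nonempty → (∀ x ∈ T, ∀ y ∈ T, dist x y < δ) →
      (∃ ρ : X → X, Continuous ρ ∧ (∀ x, ρ x ∈ T) ∧ ∀ x ∈ T, ρ x = x) → ContractibleSpace T := by
  have he := kuratowskiEmbedding.isometry X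
  set e := kuratowskiEmbedding X
  obtain ⟨U, hUo, heU, r, hr, hre⟩ := hX _ inferInstance e he.isClosedEmbedding
  obtain ⟨δ, hδ, hδU⟩ := (isCompact_range he.continuous).exists_thickening_subset_open hUo heU
  choose g hg using hr
  have hgc : Continuous g := by
    rw [he.isEmbedding.isInducing.continuous_iff]
    have : e ∘ g = r := funext hg
    rw [this]
    exact r.continuous
  refine ⟨δ, hδ, ?_⟩
  rintro T ⟨t₀, ht₀⟩ hTδ ⟨ρ, hρ, hρT, hρid⟩
  rw [contractible_iff_id_nullhomotopic]
  let L : unitInterval × T → lp (fun _ : ℕ => ℝ) ⊤ := fun q => e q.2 + (q.1 : ℝ) • (e t₀ - e q.2)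
  have hL : Continuous L := by
    have := he.continuous
    fun_prop
  have hLU : ∀ q, L q ∈ U := by
    rintro ⟨s, x⟩
    refine hδU (mem_thickening_iff.2 ⟨e x, mem_range_self _, ?_⟩)
    rw [dist_eq_norm, add_sub_cancel_left, norm_smul, Real.norm_of_nonneg s.2.1, ← dist_eq_norm,
      he.dist_eq]
    exact (mul_le_of_le_one_left dist_nonneg s.2.2).trans_lt (hTδ _ ht₀ _ x.2)
  have hgL : Continuous fun q => g ⟨L q, hLU q⟩ := hgc.comp (hL.subtype_mk hLU)
  have hge : ∀ x (h : e x ∈ U), g ⟨e x, h⟩ = x := fun x h => by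
    apply he.injective
    rw [hg, hre]
  refine ⟨⟨t₀, ht₀⟩, ⟨⟨⟨fun q => ⟨ρ (g ⟨L q, hLU q⟩), hρT _⟩,
    (hρ.comp hgL).subtype_mk _⟩, fun x => ?_, fun x => ?_⟩⟩⟩
  · apply Subtype.ext
    have hL0 : L (0, x) = e x := by simp [L]
    simp [hL0, hge, hρid _ x.2]
  · apply Subtype.ext
    have hL0 : L (1, x) = e t₀ := by simp [L]
    simp [hL0, hge, hρid _ ht₀]

/-- In a Peano space which is an ANR, all but finitely many maximal cyclic subsets are
contractible. -/
theorem IsANR.finite_maximalCyclic_not_contractible [CompactSpace X] [PathConnectedSpace X]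
    [LocallyPathConnectedSpace X] (hX : IsANR X)
    (hcl : ∀ T : Set X, MaximalCyclic T → IsClosed T) :
    {T : Set X | MaximalCyclic T ∧ ¬ ContractibleSpace T}.Finite := by
  obtain ⟨δ, hδ, h⟩ := hX.exists_contractible_of_small
  refine (finite_maximalCyclic_of_le_dist hcl hδ).subset fun T ⟨hT, hTc⟩ => ⟨hT, ?_⟩
  by_contra! hcon
  have hne : T.Nonempty := by
    rw [nonempty_iff_ne_empty]
    rintro rfl
    exact hT.1 subsingleton_empty
  exact hTc (h T hne hcon ⟨entryPoint T, hT.noChord.continuous_entryPoint (hcl T hT) hne,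
    fun x => (entryPoint_spec (hcl T hT) hne x).1, fun x hx => hT.noChord.entryPoint_of_mem hx⟩)

end SmallCyclicElements

section Brouwer

open Filter Topology MeasureTheory

variable {E : Type*} [NormedAddCommGroup E]

theorem exists_polynomial_eval_eq_det [NormedSpace ℝ E] [FiniteDimensional ℝ E] (A : E →L[ℝ] E) :
    ∃ p : Polynomial ℝ, p.natDegree ≤ Module.finrank ℝ E ∧
      ∀ t : ℝ, p.eval t = (ContinuousLinearMap.id ℝ E + t • A).det := by
  let b := Module.finBasis ℝ E
  let M := LinearMap.toMatrix b b (A : E →ₗ[ℝ] E)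
  refine ⟨((Polynomial.X : Polynomial ℝ) • M.map Polynomial.C +
    (1 : Matrix _ _ ℝ).map Polynomial.C).det, ?_, fun t => ?_⟩
  · simpa using Polynomial.natDegree_det_X_add_C_le M 1
  · rw [ContinuousLinearMap.det, ← LinearMap.det_toMatrix b,
      ← Polynomial.coe_evalRingHom, RingHom.map_det]
    congr 1
    ext i j
    simp only [RingHom.mapMatrix_apply, Matrix.map_apply, Matrix.add_apply, Matrix.smul_apply,
      smul_eq_mul, Polynomial.coe_evalRingHom, Polynomial.eval_mul,
      Polynomial.eval_X, Polynomial.eval_C, M, ContinuousLinearMap.toLinearMap_add,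
      ContinuousLinearMap.toLinearMap_smul, ContinuousLinearMap.coe_id, map_add, map_smul,
      LinearMap.toMatrix_id]
    ring

theorem exists_interpolation_weights (n : ℕ) {δ : ℝ} (hδ : 0 < δ) :
    ∃ t w : ℕ → ℝ, (∀ j, 0 < t j ∧ t j ≤ δ) ∧ ∑ j ∈ Finset.range (n + 1), w j = 1 ∧
      ∀ p : Polynomial ℝ, p.natDegree ≤ n →
        p.eval 1 = ∑ j ∈ Finset.range (n + 1), w j * p.eval (t j) := by
  set t : ℕ → ℝ := fun j => δ / (j + 1) with ht
  have hinj : InjOn t (Finset.range (n + 1)) := by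
    intro i _ j _ hij
    simp only [ht] at hij
    field_simp at hij
    exact_mod_cast (add_right_cancel hij).symm
  refine ⟨t, fun j => (Lagrange.basis (Finset.range (n + 1)) t j).eval 1,
    fun j => ⟨by positivity, div_le_self hδ.le (by simp)⟩, ?_, fun p hp => ?_⟩
  · rw [← Polynomial.eval_finsetSum, Lagrange.sum_basis hinj (by simp), Polynomial.eval_one]
  · have hdeg : p.degree < (Finset.range (n + 1)).card := by
      rw [Finset.card_range]
      exact (Polynomial.degree_le_of_natDegree_le hp).trans_lt (by exact_mod_cast Nat.lt_succ_self n)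
    conv_lhs => rw [Lagrange.eq_interpolate hinj hdeg, Lagrange.interpolate_apply]
    rw [Polynomial.eval_finsetSum]
    refine Finset.sum_congr rfl fun j _ => ?_
    rw [Polynomial.eval_mul, Polynomial.eval_C, mul_comm]

theorem lipschitzWith_indicator_closedBall [NormedSpace ℝ E] {g : E → E} {L : NNReal}
    (hg : LipschitzOnWith L g (closedBall 0 1)) (h0 : ∀ x ∈ sphere (0 : E) 1, g x = 0) :
    LipschitzWith L ((closedBall (0 : E) 1).indicator g) := by
  have key : ∀ x ∈ closedBall (0 : E) 1, ∀ y ∉ closedBall (0 : E) 1, dist (g x) 0 ≤ L * dist x y := by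
    intro x hx y hy
    have hc : ContinuousOn (fun s : ℝ => ‖x + s • (y - x)‖) (Icc 0 1) := by fun_prop
    obtain ⟨s, hs, hs1⟩ := intermediate_value_Icc zero_le_one hc
      (show (1 : ℝ) ∈ _ from ⟨by simpa using hx, by simpa using (not_le.1 (by simpa using hy)).le⟩)
    have hz : x + s • (y - x) ∈ sphere (0 : E) 1 := by simpa using hs1
    rw [← h0 _ hz]
    refine (hg.dist_le_mul x hx _ (sphere_subset_closedBall hz)).trans ?_
    refine mul_le_mul_of_nonneg_left ?_ L.2
    rw [dist_self_add_right, norm_smul, Real.norm_of_nonneg hs.1, dist_comm, dist_eq_norm]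
    exact mul_le_of_le_one_left (norm_nonneg _) hs.2
  refine LipschitzWith.of_dist_le_mul fun x y => ?_
  by_cases hx : x ∈ closedBall (0 : E) 1 <;> by_cases hy : y ∈ closedBall (0 : E) 1
  · rw [indicator_of_mem hx, indicator_of_mem hy]
    exact hg.dist_le_mul x hx y hy
  · rw [indicator_of_mem hx, indicator_of_notMem hy]
    exact key x hx y hy
  · rw [indicator_of_notMem hx, indicator_of_mem hy, dist_comm, dist_comm x]
    exact key y hy x hx
  · rw [indicator_of_notMem hx, indicator_of_notMem hy, dist_self]
    positivity

theorem surjOn_closedBall_add_smul [NormedSpace ℝ E] [CompleteSpace E] {g : E → E} {L : NNReal}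
    (hg : LipschitzOnWith L g (closedBall 0 1)) (h0 : ∀ x ∈ sphere (0 : E) 1, g x = 0) {t : ℝ}
    (ht : 0 ≤ t) (htL : t * L < 1) :
    SurjOn (fun x => x + t • g x) (closedBall 0 1) (closedBall 0 1) := by
  intro y hy
  have hlip := lipschitzWith_indicator_closedBall hg h0
  set G := (closedBall (0 : E) 1).indicator g with hG
  have hc : ContractingWith (t.toNNReal * L) fun x => y - t • G x := by
    refine ⟨by rwa [← NNReal.coe_lt_coe, NNReal.coe_mul, Real.coe_toNNReal t ht], LipschitzWith.of_dist_le_mul fun a b => ?_⟩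
    rw [dist_sub_left, dist_smul₀, Real.norm_of_nonneg ht, NNReal.coe_mul,
      Real.coe_toNNReal t ht, mul_assoc]
    exact mul_le_mul_of_nonneg_left (hlip.dist_le_mul a b) ht
  obtain ⟨x, hx⟩ : ∃ x, y - t • G x = x := ⟨_, hc.fixedPoint_isFixedPt⟩
  have hxD : x ∈ closedBall (0 : E) 1 := by
    by_contra hcon
    rw [hG, indicator_of_notMem hcon, smul_zero, sub_zero] at hx
    exact hcon (hx ▸ hy)
  refine ⟨x, hxD, ?_⟩
  rw [hG, indicator_of_mem hxD] at hx
  simp only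
  nth_rewrite 1 [← hx]
  abel

variable [InnerProductSpace ℝ E]

/-- A contraction of the unit sphere extends the identity map outside a smaller ball to a
nowhere vanishing continuous map. -/
theorem exists_continuous_ne_zero_of_contractible_sphere [ContractibleSpace (sphere (0 : E) 1)] :
    ∃ F : E → E, Continuous F ∧ (∀ x, 1 / 2 ≤ ‖F x‖) ∧ ∀ x, 1 / 2 ≤ ‖x‖ → F x = x := by
  obtain ⟨x₀, ⟨H⟩⟩ := contractible_iff_id_nullhomotopic (sphere (0 : E) 1) |>.1 inferInstance
  classical
  let N : E → sphere (0 : E) 1 := fun x =>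
    if hx : x = 0 then x₀ else ⟨‖x‖⁻¹ • x, by simp [norm_smul, hx]⟩
  have hN : ∀ x, x ≠ 0 → (N x : E) = ‖x‖⁻¹ • x := fun x hx => by simp [N, hx]
  have hNc : ∀ x, x ≠ 0 → ContinuousAt N x := by
    intro x hx
    rw [Topology.IsInducing.subtypeVal.continuousAt_iff]
    have : ContinuousAt (fun y : E => ‖y‖⁻¹ • y) x :=
      (continuous_norm.continuousAt.inv₀ (norm_ne_zero_iff.2 hx)).smul continuousAt_id
    refine this.congr ?_
    filter_upwards [isOpen_ne.mem_nhds hx] with y hy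
    exact (hN y hy).symm
  let c : E → unitInterval := fun x => projIcc 0 1 zero_le_one (2 - 4 * ‖x‖)
  have hc : Continuous c := continuous_projIcc.comp (by fun_prop)
  let F : E → E := fun x => max ‖x‖ (1 / 2) • (H (c x, N x) : E)
  have hF1 : ∀ x, ‖F x‖ = max ‖x‖ (1 / 2) := fun x => by
    rw [norm_smul, norm_eq_of_mem_sphere, mul_one, Real.norm_of_nonneg (by positivity)]
  refine ⟨F, continuous_iff_continuousAt.2 fun x => ?_, fun x => ?_, fun x hx => ?_⟩
  · by_cases hx : x = 0
    · subst hx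
      refine continuousAt_const.congr (f := fun _ => (1 / 2 : ℝ) • (x₀ : E)) ?_
      filter_upwards [ball_mem_nhds (0 : E) (show (0 : ℝ) < 1 / 4 by norm_num)] with y hy
      rw [mem_ball_zero_iff] at hy
      have hcy : c y = 1 := projIcc_of_right_le _ (by linarith)
      simp only [F]
      rw [max_eq_right (by linarith), hcy, H.apply_one]
      rfl
    · have h1 : ContinuousAt (fun y => H (c y, N y)) x :=
        ContinuousAt.comp (f := fun y => (c y, N y)) H.continuous.continuousAt
          (hc.continuousAt.prodMk (hNc x hx))
      exact ContinuousAt.smul (by fun_prop) (continuous_subtype_val.continuousAt.comp h1)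
  · rw [hF1]
    exact le_max_right _ _
  · have hx0 : x ≠ 0 := by
      rintro rfl
      norm_num at hx
    have hcx : c x = 0 := projIcc_of_le_left _ (by linarith)
    simp only [F]
    rw [max_eq_left hx, hcx, H.apply_zero, ContinuousMap.id_apply, hN x hx0, smul_smul,
      mul_inv_cancel₀ (norm_ne_zero_iff.2 hx0), one_smul]

variable [FiniteDimensional ℝ E]

theorem det_fderiv_eq_zero_of_norm_eq_one {ρ : E → E} {ρ' : E →L[ℝ] E} {x : E}
    (hρ : HasFDerivAt ρ ρ' x) (h1 : ∀ y, ‖ρ y‖ = 1) : ρ'.det = 0 := by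
  by_contra hdet
  have hort : ∀ v, inner ℝ (ρ x) (ρ' v) = 0 := by
    intro v
    have h2 := hρ.inner ℝ hρ
    have h3 : (fun y => inner ℝ (ρ y) (ρ y)) = fun _ => (1 : ℝ) := by
      ext y
      rw [real_inner_self_eq_norm_sq, h1, one_pow]
    rw [h3] at h2
    have h4 := DFunLike.congr_fun (h2.unique (hasFDerivAt_const 1 x)) v
    simp [real_inner_comm] at h4
    linarith [real_inner_comm (ρ x) (ρ' v)]
  obtain ⟨v, hv⟩ : ∃ v, ρ' v = ρ x :=
    (LinearMap.equivOfDetNeZero (ρ' : E →ₗ[ℝ] E) hdet).surjective (ρ x)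
  have := hort v
  rw [hv, real_inner_self_eq_norm_sq, h1] at this
  norm_num at this

/-- There is no continuously differentiable retraction of a ball onto its boundary sphere. -/
theorem not_exists_smooth_retraction [Nontrivial E] {ρ : E → E} (hρ : ContDiff ℝ 1 ρ)
    (h1 : ∀ y, ‖ρ y‖ = 1) (hid : ∀ x ∈ sphere (0 : E) 1, ρ x = x) : False := by
  borelize E
  let μ : Measure E := Measure.addHaar
  set D : Set E := closedBall 0 1 with hD
  have hDc : IsCompact D := isCompact_closedBall 0 1
  set g : E → E := fun x => ρ x - x with hg
  have hgC : ContDiff ℝ 1 g := hρ.sub contDiff_id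
  have hgd : ∀ x, HasFDerivAt g (fderiv ℝ g x) x := fun x =>
    (hgC.differentiable one_ne_zero x).hasFDerivAt
  have hg'c : Continuous (fderiv ℝ g) := hgC.continuous_fderiv one_ne_zero
  have hg0 : ∀ x ∈ sphere (0 : E) 1, g x = 0 := fun x hx => sub_eq_zero.2 (hid x hx)
  obtain ⟨C, hC⟩ := (hDc.bddAbove_image (hg'c.nnnorm.continuousOn))
  have hlip : LipschitzOnWith C g D :=
    (convex_closedBall 0 1).lipschitzOnWith_of_nnnorm_hasFDerivWithin_le
      (fun x _ => (hgd x).hasFDerivWithinAt) fun x hx => hC (mem_image_of_mem _ hx)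
  have hdetc : Continuous fun q : ℝ × E =>
      (ContinuousLinearMap.id ℝ E + q.1 • fderiv ℝ g q.2).det := by
    refine ContinuousLinearMap.continuous_det.comp ?_
    fun_prop
  obtain ⟨δ, hδ, hpos⟩ : ∃ δ > 0, ∀ t : ℝ, |t| < δ → ∀ x ∈ D,
      0 < (ContinuousLinearMap.id ℝ E + t • fderiv ℝ g x).det := by
    have : ∀ᶠ t : ℝ in 𝓝 0, ∀ x ∈ D,
        0 < (ContinuousLinearMap.id ℝ E + t • fderiv ℝ g x).det := by
      refine hDc.eventually_forall_of_forall_eventually fun x _ => ?_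
      refine (hdetc.tendsto (0, x)).eventually (lt_mem_nhds ?_)
      simp [ContinuousLinearMap.det]
    obtain ⟨δ, hδ, h⟩ := Metric.eventually_nhds_iff.1 this
    exact ⟨δ, hδ, fun t ht => h (by simpa using ht)⟩
  set ε : ℝ := min (δ / 2) (min 1 (1 / (2 * (C + 1)))) with hε
  have hε0 : 0 < ε := by positivity
  have hintegral : ∀ t : ℝ, 0 < t → t ≤ ε →
      ∫ x in D, (ContinuousLinearMap.id ℝ E + t • fderiv ℝ g x).det ∂μ = μ.real D := by
    intro t ht htε
    have htδ : t < δ := by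
      have : ε ≤ δ / 2 := min_le_left _ _
      linarith
    have ht1 : t ≤ 1 := htε.trans ((min_le_right _ _).trans (min_le_left _ _))
    have htC : t * C < 1 := by
      have h2 : t ≤ 1 / (2 * (C + 1)) := htε.trans ((min_le_right _ _).trans (min_le_right _ _))
      rw [le_div_iff₀ (by positivity)] at h2
      nlinarith [C.2]
    set f : E → E := fun x => x + t • g x with hf
    have hfd : ∀ x ∈ D, HasFDerivWithinAt f (ContinuousLinearMap.id ℝ E + t • fderiv ℝ g x) D x :=
      fun x _ => ((hasFDerivAt_id x).add ((hgd x).const_smul t)).hasFDerivWithinAt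
    have hfi : InjOn f D := by
      intro x hx y hy hxy
      by_contra hne
      have h2 : x - y = t • (g y - g x) := by
        rw [smul_sub, sub_eq_sub_iff_add_eq_add, add_comm (t • g y)]
        exact hxy
      have h3 := hlip.dist_le_mul y hy x hx
      have h4 : dist y x = t * dist (g y) (g x) := by
        rw [dist_comm, dist_eq_norm, h2, norm_smul, Real.norm_of_nonneg ht.le, dist_eq_norm]
      have h5 : 0 < dist y x := dist_pos.2 (Ne.symm hne)
      nlinarith
    have hfD : f '' D = D := by
      refine subset_antisymm ?_ (surjOn_closedBall_add_smul hlip hg0 ht.le htC)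
      rintro _ ⟨x, hx, rfl⟩
      have hx1 : ‖x‖ ≤ 1 := mem_closedBall_zero_iff.1 hx
      have : f x = (1 - t) • x + t • ρ x := by
        simp only [hf, hg]
        module
      rw [hD, mem_closedBall_zero_iff, this]
      refine (norm_add_le _ _).trans ?_
      rw [norm_smul, norm_smul, h1, Real.norm_of_nonneg ht.le,
        Real.norm_of_nonneg (sub_nonneg.2 ht1)]
      nlinarith
    have h := integral_image_eq_integral_abs_det_fderiv_smul μ hDc.measurableSet hfd hfi
      (fun _ => (1 : ℝ))
    rw [hfD] at h
    simp only [smul_eq_mul, mul_one, integral_const, measureReal_restrict_apply_univ] at h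
    rw [h]
    refine setIntegral_congr_fun hDc.measurableSet fun x hx => ?_
    exact (abs_of_pos (hpos t (by rwa [abs_of_pos ht]) x hx)).symm
  obtain ⟨τ, w, hτ, hw, hinterp⟩ := exists_interpolation_weights (Module.finrank ℝ E) hε0
  have hdet : ∀ x, 0 = ∑ j ∈ Finset.range (Module.finrank ℝ E + 1),
      w j * (ContinuousLinearMap.id ℝ E + τ j • fderiv ℝ g x).det := by
    intro x
    obtain ⟨p, hp, hpe⟩ := exists_polynomial_eval_eq_det (fderiv ℝ g x)
    have h := hinterp p hp
    simp only [hpe] at h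
    rw [← h, one_smul]
    refine (det_fderiv_eq_zero_of_norm_eq_one (ρ := ρ) (x := x) ?_ h1).symm
    have := (hasFDerivAt_id (𝕜 := ℝ) x).add (hgd x)
    refine this.congr_of_eventuallyEq (Eventually.of_forall fun y => ?_)
    simp [hg]
  have hzero : (0 : ℝ) = μ.real D := by
    calc (0 : ℝ) = ∫ x in D, 0 ∂μ := by simp
      _ = ∫ x in D, ∑ j ∈ Finset.range (Module.finrank ℝ E + 1),
          w j * (ContinuousLinearMap.id ℝ E + τ j • fderiv ℝ g x).det ∂μ := by
        congr 1
        ext x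
        exact hdet x
      _ = ∑ j ∈ Finset.range (Module.finrank ℝ E + 1),
          w j * ∫ x in D, (ContinuousLinearMap.id ℝ E + τ j • fderiv ℝ g x).det ∂μ := by
        rw [integral_finsetSum]
        · simp_rw [integral_const_mul]
        · intro j _
          have hj : Continuous fun x =>
              w j * (ContinuousLinearMap.id ℝ E + τ j • fderiv ℝ g x).det :=
            continuous_const.mul (hdetc.comp (Continuous.prodMk_right (τ j)))
          exact hj.continuousOn.integrableOn_compact hDc
      _ = μ.real D := by
        rw [Finset.sum_congr rfl fun j _ => by rw [hintegral (τ j) (hτ j).1 (hτ j).2],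
          ← Finset.sum_mul, hw, one_mul]
  have hposD : 0 < μ.real D :=
    ENNReal.toReal_pos (measure_closedBall_pos μ 0 one_pos).ne' hDc.measure_lt_top.ne
  linarith

/-- The unit sphere of a finite-dimensional inner product space is not contractible. -/
theorem not_contractibleSpace_sphere [Nontrivial E] : ¬ ContractibleSpace (sphere (0 : E) 1) := by
  intro hcontr
  obtain ⟨F, hFc, hF, hFid⟩ := exists_continuous_ne_zero_of_contractible_sphere (E := E)
  obtain ⟨q, hq, hqF⟩ : ∃ q : E → E, ContDiff ℝ 1 q ∧
      ∀ a ∈ closedBall (0 : E) 1, ‖q a - F a‖ ≤ 1 / 4 := by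
    obtain ⟨ε, hε, hε'⟩ := Metric.uniformContinuousOn_iff.1
      ((isCompact_closedBall (0 : E) 2).uniformContinuousOn_of_continuous hFc.continuousOn)
      (1 / 4) (by norm_num)
    obtain ⟨q, hq, hqF⟩ := hFc.exists_contDiff_dist_le_of_forall_mem_ball_dist_le
      (lt_min hε one_pos)
    refine ⟨q, hq.of_le (by norm_cast), fun a ha => ?_⟩
    rw [← dist_eq_norm]
    refine hqF a _ fun x hx => ?_
    have hx' := mem_ball.1 hx
    rw [mem_closedBall] at ha
    exact (hε' x (mem_closedBall.2 (by
      linarith [dist_triangle x a 0, min_le_right ε 1])) a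
      (mem_closedBall.2 (by linarith)) (hx'.trans_le (min_le_left _ _))).le
  let χ : ContDiffBump (0 : E) := ⟨1 / 2, 1, by norm_num, by norm_num⟩
  set h : E → E := fun x => x + χ x • (q x - x) with hh
  have hout : ∀ x, 1 ≤ ‖x‖ → h x = x := fun x hx => by
    simp [hh, χ.zero_of_le_dist (x := x) (by simpa using hx)]
  have hne : ∀ x, h x ≠ 0 := by
    intro x
    rcases le_or_gt 1 ‖x‖ with hx | hx
    · rw [hout x hx]
      rintro rfl
      norm_num at hx
    · have hqx := hqF x (mem_closedBall_zero_iff.2 hx.le)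
      have hclose : ‖h x - F x‖ ≤ 1 / 4 := by
        rcases le_total ‖x‖ (1 / 2) with hx' | hx'
        · have : χ x = 1 := χ.one_of_mem_closedBall (mem_closedBall_zero_iff.2 hx')
          simpa [hh, this] using hqx
        · have : h x - F x = χ x • (q x - F x) := by
            simp only [hh, hFid x hx']
            module
          rw [this, norm_smul, Real.norm_of_nonneg χ.nonneg]
          exact (mul_le_of_le_one_left (norm_nonneg _) χ.le_one).trans hqx
      intro h0
      rw [h0, zero_sub, norm_neg] at hclose
      linarith [hF x]
  have hhC : ContDiff ℝ 1 h := contDiff_id.add (χ.contDiff.smul (hq.sub contDiff_id))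
  refine not_exists_smooth_retraction (ρ := fun x => ‖h x‖⁻¹ • h x)
    (((hhC.norm ℝ hne).inv fun x => norm_ne_zero_iff.2 (hne x)).smul hhC) (fun x => ?_)
    fun x hx => ?_
  · rw [norm_smul, norm_inv, norm_norm, inv_mul_cancel₀ (norm_ne_zero_iff.2 (hne x))]
  · have hx1 : ‖x‖ = 1 := by simpa using hx
    simp only [hout x hx1.ge, hx1, inv_one, one_smul]

end Brouwer

section NeighborhoodExtensors

open Filter Topology

variable {X : Type} [TopologicalSpace X] {P P₁ P₂ : Set X}

/-- A set into which continuous maps extend from closed subsets of metric spaces to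
neighborhoods. -/
def IsNhdExtensor (P : Set X) : Prop :=
  ∀ (Z : Type) [MetricSpace Z] (A : Set Z) (f : Z → X), IsClosed A → ContinuousOn f A →
    MapsTo f A P → ∃ (U : Set Z) (g : Z → X), IsOpen U ∧ A ⊆ U ∧ ContinuousOn g U ∧
      MapsTo g U P ∧ EqOn g f A

theorem isNhdExtensor_empty : IsNhdExtensor (∅ : Set X) := fun _ _ _ f _ _ hfm =>
  ⟨∅, f, isOpen_empty, fun _ ha => hfm ha, continuousOn_empty f, mapsTo_empty f _,
    fun _ _ => rfl⟩

theorem isNhdExtensor_singleton (p : X) : IsNhdExtensor {p} := fun _ _ _ _ _ _ hfm =>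
  ⟨univ, fun _ => p, isOpen_univ, subset_univ _, continuousOn_const, fun _ _ => rfl,
    fun _ ha => (hfm ha).symm⟩

theorem isNhdExtensor_univ_of_tietze [TietzeExtension.{0, 0} X] :
    IsNhdExtensor (univ : Set X) := by
  intro Z _ A f hA hf _
  obtain ⟨g, hg⟩ := ContinuousMap.exists_restrict_eq hA ⟨A.domRestrict f, hf.domRestrict⟩
  exact ⟨univ, g, isOpen_univ, subset_univ _, g.continuous.continuousOn, mapsTo_univ _ _,
    fun a ha => DFunLike.congr_fun hg ⟨a, ha⟩⟩

theorem IsNhdExtensor.of_retract {Y : Type} [TopologicalSpace Y] {Q : Set Y}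
    (hQ : IsNhdExtensor Q) {φ : Y → X} {ψ : X → Y} (hφ : ContinuousOn φ Q) (hφm : MapsTo φ Q P)
    (hψ : ContinuousOn ψ P) (hψm : MapsTo ψ P Q) (hφψ : ∀ x ∈ P, φ (ψ x) = x) :
    IsNhdExtensor P := by
  intro Z _ A f hA hf hfm
  obtain ⟨U, g, hU, hAU, hg, hgm, hgf⟩ := hQ Z A (ψ ∘ f) hA (hψ.comp hf hfm) (hψm.comp hfm)
  refine ⟨U, φ ∘ g, hU, hAU, hφ.comp hg hgm, hφm.comp hgm, fun a ha => ?_⟩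
  rw [Function.comp_apply, hgf ha, Function.comp_apply, hφψ _ (hfm ha)]

theorem IsNhdExtensor.of_univ_subtype (h : IsNhdExtensor (univ : Set P)) : IsNhdExtensor P := by
  rcases P.eq_empty_or_nonempty with rfl | ⟨p, hp⟩
  · exact isNhdExtensor_empty
  classical
  refine h.of_retract (φ := Subtype.val) (ψ := fun x => if hx : x ∈ P then ⟨x, hx⟩ else ⟨p, hp⟩)
    continuous_subtype_val.continuousOn (fun x _ => x.2) ?_ (mapsTo_univ _ _) ?_
  · rw [continuousOn_iff_continuous_domRestrict]
    refine continuous_id.congr fun x => ?_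
    simp [x.2]
  · intro x hx
    simp [hx]

theorem IsNhdExtensor.inter_isOpen (hP : IsNhdExtensor P) {V : Set X} (hV : IsOpen V) :
    IsNhdExtensor (P ∩ V) := by
  intro Z _ A f hA hf hfm
  obtain ⟨U, g, hU, hAU, hg, hgm, hgf⟩ := hP Z A f hA hf (hfm.mono_right inter_subset_left)
  refine ⟨U ∩ g ⁻¹' V, g, hg.isOpen_inter_preimage hU hV, fun a ha => ⟨hAU ha, ?_⟩,
    hg.mono inter_subset_left, fun z hz => ⟨hgm hz.1, hz.2⟩, hgf⟩
  rw [mem_preimage, hgf ha]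
  exact (hfm ha).2

theorem exists_glued_extension {Z : Type} [TopologicalSpace Z] {A C₁ C₂ U₁ U₂ : Set Z}
    (hC₁ : IsClosed C₁) (hC₂ : IsClosed C₂) (hC : C₁ ∪ C₂ = univ) (hU₁ : IsOpen U₁)
    (hU₂ : IsOpen U₂) (hA₁ : A ∩ C₁ ⊆ U₁) (hA₂ : A ∩ C₂ ⊆ U₂) {f g₁ g₂ : Z → X}
    (hg₁ : ContinuousOn g₁ U₁) (hg₂ : ContinuousOn g₂ U₂) (hm₁ : MapsTo g₁ U₁ P)
    (hm₂ : MapsTo g₂ U₂ P) (hf₁ : EqOn g₁ f (A ∩ C₁)) (hf₂ : EqOn g₂ f (A ∩ C₂))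
    (heq : ∀ z ∈ C₁ ∩ C₂, z ∈ U₁ → z ∈ U₂ → g₁ z = g₂ z) :
    ∃ (U : Set Z) (g : Z → X), IsOpen U ∧ A ⊆ U ∧ ContinuousOn g U ∧ MapsTo g U P ∧
      EqOn g f A := by
  classical
  have hc₁ : C₁ᶜ ⊆ C₂ := fun z hz => (hC.symm ▸ mem_univ z : z ∈ C₁ ∪ C₂).resolve_left hz
  have hcl : closure C₁ᶜ ⊆ C₂ := closure_minimal hc₁ hC₂
  set U : Set Z := (C₂ᶜ ∩ U₁) ∪ (C₁ᶜ ∩ U₂) ∪ (U₁ ∩ U₂) with hU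
  have h₁ : U ∩ C₁ ⊆ U₁ := by
    rintro z ⟨(hz | hz) | hz, hz₁⟩
    exacts [hz.2, absurd hz₁ hz.1, hz.1]
  have h₂ : U ∩ C₂ ⊆ U₂ := by
    rintro z ⟨(hz | hz) | hz, hz₂⟩
    exacts [absurd hz₂ hz.1, hz.2, hz.2]
  refine ⟨U, C₁.piecewise g₁ g₂, ?_, ?_, ?_, ?_, ?_⟩
  · exact ((hC₂.isOpen_compl.inter hU₁).union (hC₁.isOpen_compl.inter hU₂)).union
      (hU₁.inter hU₂)
  · intro a ha
    by_cases ha₁ : a ∈ C₁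
    · by_cases ha₂ : a ∈ C₂
      · exact Or.inr ⟨hA₁ ⟨ha, ha₁⟩, hA₂ ⟨ha, ha₂⟩⟩
      · exact Or.inl (Or.inl ⟨ha₂, hA₁ ⟨ha, ha₁⟩⟩)
    · exact Or.inl (Or.inr ⟨ha₁, hA₂ ⟨ha, hc₁ ha₁⟩⟩)
  · refine ContinuousOn.piecewise ?_ ?_ ?_
    · rintro z ⟨hzU, hz⟩
      rw [frontier_eq_closure_inter_closure, hC₁.closure_eq] at hz
      exact heq z ⟨hz.1, hcl hz.2⟩ (h₁ ⟨hzU, hz.1⟩) (h₂ ⟨hzU, hcl hz.2⟩)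
    · rw [hC₁.closure_eq]
      exact hg₁.mono h₁
    · exact hg₂.mono ((inter_subset_inter_right _ hcl).trans h₂)
  · intro z hz
    by_cases hz₁ : z ∈ C₁
    · rw [piecewise_eq_of_mem _ _ _ hz₁]
      exact hm₁ (h₁ ⟨hz, hz₁⟩)
    · rw [piecewise_eq_of_notMem _ _ _ hz₁]
      exact hm₂ (h₂ ⟨hz, hc₁ hz₁⟩)
  · intro a ha
    by_cases ha₁ : a ∈ C₁
    · rw [piecewise_eq_of_mem _ _ _ ha₁]
      exact hf₁ ⟨ha, ha₁⟩
    · rw [piecewise_eq_of_notMem _ _ _ ha₁]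
      exact hf₂ ⟨ha, hc₁ ha₁⟩

/-- Extension from the union of two closed sets of a map given on each of them. -/
theorem IsNhdExtensor.exists_extension_of_eqOn {Z : Type} [MetricSpace Z] (hP : IsNhdExtensor P)
    {A B : Set Z} {f g : Z → X} (hA : IsClosed A) (hB : IsClosed B) (hf : ContinuousOn f A)
    (hg : ContinuousOn g B) (hfm : MapsTo f A P) (hgm : MapsTo g B P)
    (hfg : EqOn f g (A ∩ B)) :
    ∃ (U : Set Z) (h : Z → X), IsOpen U ∧ A ∪ B ⊆ U ∧ ContinuousOn h U ∧ MapsTo h U P ∧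
      EqOn h f A ∧ EqOn h g B := by
  classical
  have e₁ : EqOn (A.piecewise f g) f A := piecewise_eqOn A f g
  have e₂ : EqOn (A.piecewise f g) g B := fun z hz => by
    by_cases hzA : z ∈ A
    · rw [piecewise_eq_of_mem _ _ _ hzA]
      exact hfg ⟨hzA, hz⟩
    · rw [piecewise_eq_of_notMem _ _ _ hzA]
  obtain ⟨U, h, hU, hAU, hh, hhm, heq⟩ := hP Z (A ∪ B) (A.piecewise f g) (hA.union hB)
    ((hf.congr e₁).union_of_isClosed (hg.congr e₂) hA hB)
    (fun z hz => hz.elim (fun h => e₁ h ▸ hfm h) (fun h => e₂ h ▸ hgm h))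
  exact ⟨U, h, hU, hAU, hh, hhm, (heq.mono subset_union_left).trans e₁,
    (heq.mono subset_union_right).trans e₂⟩

theorem IsNhdExtensor.of_isOpen_cover {V₁ V₂ : Set X} (hV₁ : IsOpen V₁) (hV₂ : IsOpen V₂)
    (hP₁ : IsNhdExtensor (P ∩ V₁)) (hP₂ : IsNhdExtensor (P ∩ V₂)) (hP : P ⊆ V₁ ∪ V₂) :
    IsNhdExtensor P := by
  intro Z _ A f hA hf hfm
  have hF₁ : IsClosed (A ∩ f ⁻¹' V₂ᶜ) := hf.preimage_isClosed_of_isClosed hA hV₂.isClosed_compl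
  have hF₂ : IsClosed (A ∩ f ⁻¹' V₁ᶜ) := hf.preimage_isClosed_of_isClosed hA hV₁.isClosed_compl
  have hdis : Disjoint (A ∩ f ⁻¹' V₂ᶜ) (A ∩ f ⁻¹' V₁ᶜ) := by
    rw [disjoint_left]
    rintro a ⟨ha, ha₂⟩ ⟨-, ha₁⟩
    exact (hP (hfm ha)).elim ha₁ ha₂
  obtain ⟨O₁, O₂, hO₁, hO₂, hFO₁, hFO₂, hOd⟩ := normal_separation hF₁ hF₂ hdis
  have hCA₁ : ∀ a ∈ A, a ∈ O₂ᶜ → f a ∈ V₁ := fun a ha haO => by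
    by_contra h
    exact haO (hFO₂ ⟨ha, h⟩)
  have hCA₂ : ∀ a ∈ A, a ∈ O₁ᶜ → f a ∈ V₂ := fun a ha haO => by
    by_contra h
    exact haO (hFO₁ ⟨ha, h⟩)
  have hC : O₂ᶜ ∪ O₁ᶜ = univ := by
    rw [← compl_inter, inter_comm, hOd.inter_eq, compl_empty]
  have hC0 : IsClosed (O₂ᶜ ∩ O₁ᶜ) := hO₂.isClosed_compl.inter hO₁.isClosed_compl
  obtain ⟨U₀, g₀, hU₀, hAU₀, hg₀, hgm₀, hgf₀⟩ := hP₁.inter_isOpen hV₂ Z (A ∩ (O₂ᶜ ∩ O₁ᶜ)) f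
    (hA.inter hC0) (hf.mono inter_subset_left)
    (fun a ha => ⟨⟨hfm ha.1, hCA₁ a ha.1 ha.2.1⟩, hCA₂ a ha.1 ha.2.2⟩)
  obtain ⟨W, hW, hAW, hWU⟩ := normal_exists_closure_subset (hA.inter hC0) hU₀ hAU₀
  have hK : IsClosed (O₂ᶜ ∩ O₁ᶜ ∩ closure W) := hC0.inter isClosed_closure
  have hKU : O₂ᶜ ∩ O₁ᶜ ∩ closure W ⊆ U₀ := inter_subset_right.trans hWU
  obtain ⟨U₁, g₁, hU₁, hAU₁, hg₁, hgm₁, hgf₁, hgK₁⟩ :=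
    hP₁.exists_extension_of_eqOn (f := f) (g := g₀) (hA.inter hO₂.isClosed_compl) hK
      (hf.mono inter_subset_left) (hg₀.mono hKU) (fun a ha => ⟨hfm ha.1, hCA₁ a ha.1 ha.2⟩)
      (fun z hz => (hgm₀ (hKU hz)).1)
      (fun z hz => (hgf₀ ⟨hz.1.1, hz.2.1⟩).symm)
  obtain ⟨U₂, g₂, hU₂, hAU₂, hg₂, hgm₂, hgf₂, hgK₂⟩ :=
    hP₂.exists_extension_of_eqOn (f := f) (g := g₀) (hA.inter hO₁.isClosed_compl) hK
      (hf.mono inter_subset_left) (hg₀.mono hKU) (fun a ha => ⟨hfm ha.1, hCA₂ a ha.1 ha.2⟩)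
      (fun z hz => ⟨(hgm₀ (hKU hz)).1.1, (hgm₀ (hKU hz)).2⟩)
      (fun z hz => (hgf₀ ⟨hz.1.1, hz.2.1⟩).symm)
  have hR : IsClosed ((O₂ᶜ ∩ O₁ᶜ) \ W) := hC0.sdiff hW
  refine exists_glued_extension (U₁ := U₁ \ ((O₂ᶜ ∩ O₁ᶜ) \ W)) (U₂ := U₂ \ ((O₂ᶜ ∩ O₁ᶜ) \ W))
    hO₂.isClosed_compl hO₁.isClosed_compl hC (hU₁.sdiff hR) (hU₂.sdiff hR) ?_ ?_
    (hg₁.mono sdiff_subset) (hg₂.mono sdiff_subset)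
    (fun z hz => (hgm₁ hz.1).1) (fun z hz => (hgm₂ hz.1).1) hgf₁ hgf₂ ?_
  · exact fun a ha => ⟨hAU₁ (Or.inl ha), fun h => h.2 (hAW ⟨ha.1, h.1⟩)⟩
  · exact fun a ha => ⟨hAU₂ (Or.inl ha), fun h => h.2 (hAW ⟨ha.1, h.1⟩)⟩
  · intro z hz hz₁ _
    have hzW : z ∈ W := by
      by_contra h
      exact hz₁.2 ⟨hz, h⟩
    rw [hgK₁ ⟨hz, subset_closure hzW⟩, hgK₂ ⟨hz, subset_closure hzW⟩]

/-- The wedge of two closed neighborhood extensors is a neighborhood extensor. -/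
theorem IsNhdExtensor.wedge {p : X} (hP₁ : IsNhdExtensor P₁) (hP₂ : IsNhdExtensor P₂)
    (hc₁ : IsClosed P₁) (hc₂ : IsClosed P₂) (hp : P₁ ∩ P₂ = {p}) :
    IsNhdExtensor (P₁ ∪ P₂) := by
  intro Z _ A f hA hf hfm
  have hp' : p ∈ P₁ ∩ P₂ := hp ▸ mem_singleton p
  set A₁ := A ∩ f ⁻¹' P₁ with hA₁
  set A₂ := A ∩ f ⁻¹' P₂ with hA₂
  have hA₁c : IsClosed A₁ := hf.preimage_isClosed_of_isClosed hA hc₁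
  have hA₂c : IsClosed A₂ := hf.preimage_isClosed_of_isClosed hA hc₂
  have hA₁₂ : A ⊆ A₁ ∪ A₂ := fun a ha => (hfm ha).imp (fun h => ⟨ha, h⟩) fun h => ⟨ha, h⟩
  rcases A₁.eq_empty_or_nonempty with h₁ | h₁
  · obtain ⟨U, g, hU, hAU, hg, hgm, hgf⟩ := hP₂ Z A f hA hf fun a ha =>
      ((hA₁₂ ha).resolve_left (by simp [h₁])).2
    exact ⟨U, g, hU, hAU, hg, hgm.mono_right subset_union_right, hgf⟩
  rcases A₂.eq_empty_or_nonempty with h₂ | h₂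
  · obtain ⟨U, g, hU, hAU, hg, hgm, hgf⟩ := hP₁ Z A f hA hf fun a ha =>
      ((hA₁₂ ha).resolve_right (by simp [h₂])).2
    exact ⟨U, g, hU, hAU, hg, hgm.mono_right subset_union_left, hgf⟩
  have hd₁ : Continuous fun z => infDist z A₁ := continuous_infDist_pt A₁
  have hd₂ : Continuous fun z => infDist z A₂ := continuous_infDist_pt A₂
  set C₁ := {z | infDist z A₁ ≤ infDist z A₂}
  set C₂ := {z | infDist z A₂ ≤ infDist z A₁}
  have hC₁ : IsClosed C₁ := isClosed_le hd₁ hd₂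
  have hC₂ : IsClosed C₂ := isClosed_le hd₂ hd₁
  have hC : C₁ ∪ C₂ = univ := 
    eq_univ_of_forall fun z => le_total (infDist z A₁) (infDist z A₂)
  have hAC₁ : A ∩ C₁ ⊆ A₁ := by
    rintro a ⟨ha, haC⟩
    rcases hA₁₂ ha with h | h
    · exact h
    · rw [hA₁c.mem_iff_infDist_zero h₁]
      have haC' : infDist a A₁ ≤ infDist a A₂ := haC
      rw [infDist_zero_of_mem h] at haC'
      exact le_antisymm haC' infDist_nonneg
  have hAC₂ : A ∩ C₂ ⊆ A₂ := by
    rintro a ⟨ha, haC⟩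
    rcases hA₁₂ ha with h | h
    · rw [hA₂c.mem_iff_infDist_zero h₂]
      have haC' : infDist a A₂ ≤ infDist a A₁ := haC
      rw [infDist_zero_of_mem h] at haC'
      exact le_antisymm haC' infDist_nonneg
    · exact h
  have hfp : ∀ a ∈ A, a ∈ C₁ ∩ C₂ → f a = p := fun a ha haC => by
    have : f a ∈ P₁ ∩ P₂ := ⟨(hAC₁ ⟨ha, haC.1⟩).2, (hAC₂ ⟨ha, haC.2⟩).2⟩
    rwa [hp] at this
  obtain ⟨U₁, g₁, hU₁, hAU₁, hg₁, hgm₁, hgf₁, hgK₁⟩ :=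
    hP₁.exists_extension_of_eqOn (f := f) (g := fun _ => p) hA₁c (hC₁.inter hC₂)
      (hf.mono inter_subset_left) continuousOn_const (fun a ha => ha.2)
      (fun _ _ => hp'.1) (fun a ha => hfp a ha.1.1 ha.2)
  obtain ⟨U₂, g₂, hU₂, hAU₂, hg₂, hgm₂, hgf₂, hgK₂⟩ :=
    hP₂.exists_extension_of_eqOn (f := f) (g := fun _ => p) hA₂c (hC₁.inter hC₂)
      (hf.mono inter_subset_left) continuousOn_const (fun a ha => ha.2)
      (fun _ _ => hp'.2) (fun a ha => hfp a ha.1.1 ha.2)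
  exact exists_glued_extension hC₁ hC₂ hC hU₁ hU₂
    (hAC₁.trans (subset_union_left.trans hAU₁)) (hAC₂.trans (subset_union_left.trans hAU₂))
    hg₁ hg₂ (hgm₁.mono_right subset_union_left) (hgm₂.mono_right subset_union_right)
    (hgf₁.mono hAC₁) (hgf₂.mono hAC₂) fun z hz _ _ => by rw [hgK₁ hz, hgK₂ hz]

theorem IsClosedSurface.isNhdExtensor {S : Type} [TopologicalSpace S] (hS : IsClosedSurface S) :
    IsNhdExtensor (univ : Set S) := by
  obtain ⟨hcomp, -, -, ⟨hch⟩⟩ := hS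
  have key : ∃ V : Set S, IsOpen V ∧ univ ⊆ V ∧ IsNhdExtensor V := by
    refine isCompact_univ.induction_on
      (p := fun s => ∃ V : Set S, IsOpen V ∧ s ⊆ V ∧ IsNhdExtensor V)
      ⟨∅, isOpen_empty, subset_rfl, isNhdExtensor_empty⟩
      (fun s t hst ⟨V, hV, htV, hVe⟩ => ⟨V, hV, hst.trans htV, hVe⟩) ?_ ?_
    · rintro s t ⟨V₁, hV₁, hs, hVe₁⟩ ⟨V₂, hV₂, ht, hVe₂⟩
      refine ⟨V₁ ∪ V₂, hV₁.union hV₂, union_subset_union hs ht,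
        IsNhdExtensor.of_isOpen_cover hV₁ hV₂ ?_ ?_ subset_rfl⟩
      · rwa [union_inter_cancel_left]
      · rwa [union_inter_cancel_right]
    · intro x _
      let e := chartAt (EuclideanSpace ℝ (Fin 2)) x
      have htar : IsNhdExtensor e.target := by
        rw [← univ_inter e.target]
        exact isNhdExtensor_univ_of_tietze.inter_isOpen e.open_target
      exact ⟨e.source, mem_nhdsWithin_of_mem_nhds (e.open_source.mem_nhds (mem_chart_source _ x)),
        e.source, e.open_source, subset_rfl,
        htar.of_retract e.continuousOn_symm (fun y hy => e.map_target hy) e.continuousOn e.mapsTo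
          fun y hy => e.left_inv hy⟩
  obtain ⟨V, -, hV, hVe⟩ := key
  rwa [univ_subset_iff.1 hV] at hVe

/-- An arc is parametrized by a map of the real line which has a continuous right inverse on
the arc. -/
theorem IsArc.exists_param {X : Type} [MetricSpace X] {A : Set X} {a b : X} (h : IsArc A a b) :
    ∃ (f : ℝ → X) (g : X → ℝ), Continuous f ∧ (∀ t, f t ∈ A) ∧ f 0 = a ∧ f 1 = b ∧
      ContinuousOn g A ∧ g a = 0 ∧ ∀ x ∈ A, f (g x) = x := by
  obtain ⟨f, hf, hfi, rfl, rfl, rfl⟩ := h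
  refine ⟨fun t => f (projIcc 0 1 zero_le_one t), Function.invFunOn f (Icc 0 1),
    hf.domRestrict.comp (continuous_projIcc (h := zero_le_one)),
    fun t => mem_image_of_mem _ (projIcc 0 1 zero_le_one t).2, by simp, by simp, ?_,
    hfi.leftInvOn_invFunOn (by simp), ?_⟩
  · rw [continuousOn_iff_isClosed]
    intro C hC
    refine ⟨f '' (Icc 0 1 ∩ C),
      ((isCompact_Icc.inter_right hC).image_of_continuousOn
        (hf.mono inter_subset_left)).isClosed, ?_⟩
    ext x
    constructor
    · rintro ⟨hx, t, ht, rfl⟩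
      rw [mem_preimage, hfi.leftInvOn_invFunOn ht] at hx
      exact ⟨⟨t, ⟨ht, hx⟩, rfl⟩, ⟨t, ht, rfl⟩⟩
    · rintro ⟨⟨t, ⟨ht, hx⟩, rfl⟩, hx'⟩
      refine ⟨?_, hx'⟩
      rwa [mem_preimage, hfi.leftInvOn_invFunOn ht]
  · rintro _ ⟨t, ht, rfl⟩
    simp only [hfi.leftInvOn_invFunOn ht, projIcc_of_mem _ ht]

theorem IsArc.isNhdExtensor {X : Type} [MetricSpace X] {A : Set X} {a b : X} (h : IsArc A a b) :
    IsNhdExtensor A := by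
  obtain ⟨f, g, hf, hfA, -, -, hg, -, hfg⟩ := h.exists_param
  exact (isNhdExtensor_univ_of_tietze (X := ℝ)).of_retract hf.continuousOn (fun t _ => hfA t) hg
    (mapsTo_univ _ _) hfg

end NeighborhoodExtensors

section Skeleta

open Filter Topology

variable {X : Type} [MetricSpace X] {A P Q T : Set X} {p q x : X}

/-- Path connected closed subsets which are neighborhood extensors. -/
structure IsSkeleton (P : Set X) : Prop where
  isClosed : IsClosed P
  nonempty : P.Nonempty
  joinedIn : ∀ x ∈ P, ∀ y ∈ P, JoinedIn P x y
  isNhdExtensor : IsNhdExtensor P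

theorem isSkeleton_singleton (p : X) : IsSkeleton {p} where
  isClosed := isClosed_singleton
  nonempty := singleton_nonempty p
  joinedIn := by
    rintro x rfl y rfl
    exact JoinedIn.refl rfl
  isNhdExtensor := isNhdExtensor_singleton p

theorem IsArc.isSkeleton (h : IsArc A p q) : IsSkeleton A where
  isClosed := h.isClosed
  nonempty := ⟨p, h.left_mem⟩
  joinedIn := by
    obtain ⟨f, hf, -, -, -, rfl⟩ := h
    have hpc : IsPathConnected (f '' Icc 0 1) :=
      ((convex_Icc (0 : ℝ) 1).isPathConnected ⟨0, by simp⟩).image' hf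
    exact hpc.joinedIn
  isNhdExtensor := h.isNhdExtensor

theorem IsClosedSurface.isSkeleton (hT : CyclicallyConnected T) (hS : IsClosedSurface T) :
    IsSkeleton T where
  isClosed := (isCompact_iff_compactSpace.2 hS.1).isClosed
  nonempty := nonempty_coe_sort.1 hS.2.1.toNonempty
  joinedIn := fun _ hx _ hy => hT.joinedIn hx hy
  isNhdExtensor := hS.isNhdExtensor.of_univ_subtype

theorem IsSkeleton.union (hP : IsSkeleton P) (hQ : IsSkeleton Q) (hPQ : P ∩ Q = {p}) :
    IsSkeleton (P ∪ Q) where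
  isClosed := hP.isClosed.union hQ.isClosed
  nonempty := hP.nonempty.mono subset_union_left
  joinedIn := by
    have hp : p ∈ P ∩ Q := hPQ ▸ mem_singleton p
    have key : ∀ x ∈ P ∪ Q, JoinedIn (P ∪ Q) x p := by
      rintro x (hx | hx)
      · exact (hP.joinedIn x hx p hp.1).mono subset_union_left
      · exact (hQ.joinedIn x hx p hp.2).mono subset_union_right
    exact fun x hx y hy => (key x hx).trans (key y hy).symm
  isNhdExtensor := hP.isNhdExtensor.wedge hQ.isNhdExtensor hP.isClosed hQ.isClosed hPQ

/-- Every maximal cyclic set is contained in `P` or meets it in at most one point. -/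
def IsSaturated (P : Set X) : Prop :=
  ∀ T, MaximalCyclic T → T ⊆ P ∨ (T ∩ P).Subsingleton

theorem IsSkeleton.noChord (hP : IsSkeleton P) (h : IsSaturated P) : NoChord P := by
  intro u hu v hv A hA hAP
  obtain ⟨B, hBP, hB⟩ := (hP.joinedIn u hu v hv).exists_isArc hA.ne
  have hJ := hA.isJordanCurve_union hB ((inter_subset_inter_right _ hBP).trans hAP)
  obtain ⟨S, hS, hJS⟩ := hJ.cyclicallyConnected.exists_maximalCyclic fun h =>
    hA.ne (h (Or.inl hA.left_mem) (Or.inl hA.right_mem))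
  have hAS : A ⊆ S := subset_union_left.trans hJS
  rcases h S hS with hSP | hSP
  · obtain ⟨c, hc, hcu, hcv⟩ := hA.exists_ne_ends
    exact (hAP ⟨hc, hSP (hAS hc)⟩).elim hcu hcv
  · exact hA.ne (hSP ⟨hAS hA.left_mem, hu⟩ ⟨hAS hA.right_mem, hv⟩)

theorem IsSkeleton.isSaturated_union [PathConnectedSpace X] (hP : IsSkeleton P)
    (hPs : IsSaturated P) (hQ : IsSkeleton Q) (hPQ : P ∩ Q = {p})
    (hQs : ∀ T, MaximalCyclic T → ¬ T ⊆ P → T ⊆ Q ∨ (T ∩ Q).Subsingleton) :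
    IsSaturated (P ∪ Q) := by
  intro T hT
  by_cases hTP : T ⊆ P
  · exact Or.inl (hTP.trans subset_union_left)
  rcases hQs T hT hTP with hTQ | hTQ
  · exact Or.inl (hTQ.trans subset_union_right)
  have hTP' : (T ∩ P).Subsingleton := (hPs T hT).resolve_left hTP
  have hch := hP.noChord hPs
  have hp : p ∈ P ∩ Q := hPQ ▸ mem_singleton p
  have hmix : ∀ a ∈ T ∩ P, ∀ b ∈ T ∩ Q, a = b := by
    intro a ha b hb
    have h₁ := hch.entryPoint_eq_of_subsingleton hP.isClosed hP.nonempty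
      (fun x hx y hy => hT.2.1.joinedIn hx hy) hTP' ha.1 hb.1
    have h₂ := hch.entryPoint_eq_of_subsingleton hP.isClosed hP.nonempty hQ.joinedIn
      (by rw [inter_comm, hPQ]; exact subsingleton_singleton) hp.2 hb.2
    rw [hch.entryPoint_of_mem ha.2] at h₁
    rw [hch.entryPoint_of_mem hp.1, ← h₁] at h₂
    exact hTQ ⟨ha.1, h₂ ▸ hp.2⟩ hb
  right
  rintro a ⟨haT, ha | ha⟩ b ⟨hbT, hb | hb⟩
  · exact hTP' ⟨haT, ha⟩ ⟨hbT, hb⟩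
  · exact hmix a ⟨haT, ha⟩ b ⟨hbT, hb⟩
  · exact (hmix b ⟨hbT, hb⟩ a ⟨haT, ha⟩).symm
  · exact hTQ ⟨haT, ha⟩ ⟨hbT, hb⟩

/-- A saturated skeleton can be enlarged to touch a maximal cyclic set it does not contain. -/
theorem IsSkeleton.exists_touching [PathConnectedSpace X] (hP : IsSkeleton P)
    (hPs : IsSaturated P) (hcl : ∀ T : Set X, MaximalCyclic T → IsClosed T)
    (hfin : {T : Set X | MaximalCyclic T}.Finite) (hT : MaximalCyclic T) (hTP : ¬ T ⊆ P) :
    ∃ P', P ⊆ P' ∧ IsSkeleton P' ∧ IsSaturated P' ∧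
      ∃ S, MaximalCyclic S ∧ ¬ S ⊆ P ∧ ∃ q, S ∩ P' = {q} := by
  set R : Set X := ⋃₀ {S | MaximalCyclic S ∧ ¬ S ⊆ P}
  have hR : IsClosed R := by
    rw [show R = ⋃ S ∈ {S | MaximalCyclic S ∧ ¬ S ⊆ P}, S from sUnion_eq_biUnion]
    exact (hfin.subset fun S hS => hS.1).isClosed_biUnion fun S hS => hcl S hS.1
  obtain ⟨x, hx⟩ := hP.nonempty
  obtain ⟨t, ht⟩ : T.Nonempty := nonempty_iff_ne_empty.2 fun h => hTP (h ▸ empty_subset P)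
  have hTR : T ⊆ R := subset_sUnion_of_mem ⟨hT, hTP⟩
  obtain ⟨q, hqR, -, hxq⟩ := JoinedIn.exists_first_hit
    (joinedIn_univ.2 (PathConnectedSpace.joined x t)) hR (hTR ht)
  obtain ⟨S, ⟨hS, hSP⟩, hqS⟩ := hqR
  have hSs : (S ∩ P).Subsingleton := (hPs S hS).resolve_left hSP
  by_cases hqP : q ∈ P
  · exact ⟨P, subset_rfl, hP, hPs, S, hS, hSP, q, hSs.eq_singleton_of_mem ⟨hqS, hqP⟩⟩
  obtain ⟨A, hAR, hA⟩ := hxq.symm.exists_isArc fun h => hqP (h ▸ hx)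
  obtain ⟨p, hp, B, hBA, hB, hBP⟩ := hA.exists_first_hit hP.isClosed hqP ⟨x, hA.right_mem, hx⟩
  have hBR : ∀ z ∈ B, z ∈ R → z = q := fun z hz hzR =>
    (hAR (hBA hz)).2.resolve_left fun h => h hzR
  have hPB : P ∩ B = {p} := by rw [inter_comm, hBP]
  have hs := hP.isSaturated_union hPs hB.isSkeleton hPB fun T hT hTP => Or.inr fun a ha b hb => by
    rw [hBR a ha.2 ⟨T, ⟨hT, hTP⟩, ha.1⟩, hBR b hb.2 ⟨T, ⟨hT, hTP⟩, hb.1⟩]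
  refine ⟨P ∪ B, subset_union_left, hP.union hB.isSkeleton hPB, hs, S, hS, hSP, q, ?_⟩
  have hSB : ¬ S ⊆ P ∪ B := by
    intro h
    have hSB : S \ {q} ⊆ S ∩ P := fun z hz =>
      ⟨hz.1, (h hz.1).resolve_right fun hzB => hz.2 (hBR z hzB ⟨S, ⟨hS, hSP⟩, hz.1⟩)⟩
    obtain ⟨z, hz, hzq⟩ : ∃ z ∈ S, z ≠ q := by
      by_contra! hc
      exact hS.1 fun a ha b hb => (hc a ha).trans (hc b hb).symm
    obtain ⟨D, hDS, hD⟩ := hS.2.1.exists_isArc hqS hz hzq.symm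
    obtain ⟨c, hc, hcq, hcz⟩ := hD.exists_ne_ends
    exact hcz (hSs (hSB ⟨hDS hc, hcq⟩) (hSB ⟨hz, hzq⟩))
  exact ((hs S hS).resolve_left hSB).eq_singleton_of_mem ⟨hqS, Or.inr hB.left_mem⟩

theorem exists_isSkeleton_superset_maximalCyclic [PathConnectedSpace X]
    (hsurf : ∀ T : Set X, MaximalCyclic T → IsClosedSurface T)
    (hfin : {T : Set X | MaximalCyclic T}.Finite) :
    ∃ P : Set X, IsSkeleton P ∧ ∀ T, MaximalCyclic T → T ⊆ P := by
  have hsk : ∀ T : Set X, MaximalCyclic T → IsSkeleton T := fun T hT =>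
    (hsurf T hT).isSkeleton hT.2.1
  suffices H : ∀ n : ℕ, ∀ P : Set X, IsSkeleton P → IsSaturated P →
      {T | MaximalCyclic T ∧ ¬ T ⊆ P}.ncard = n →
      ∃ P : Set X, IsSkeleton P ∧ ∀ T, MaximalCyclic T → T ⊆ P by
    obtain ⟨x⟩ : Nonempty X := PathConnectedSpace.nonempty
    exact H _ {x} (isSkeleton_singleton x)
      (fun T _ => Or.inr (subsingleton_singleton.anti inter_subset_right)) rfl
  intro n
  induction n using Nat.strong_induction_on with
  | _ n ih =>
    intro P hP hPs hn
    by_cases hall : ∀ T, MaximalCyclic T → T ⊆ P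
    · exact ⟨P, hP, hall⟩
    push Not at hall
    obtain ⟨T, hT, hTP⟩ := hall
    obtain ⟨P', hPP', hP', hPs', S, hS, hSP, q, hSq⟩ :=
      hP.exists_touching hPs (fun T hT => (hsk T hT).isClosed) hfin hT hTP
    have hSq' : P' ∩ S = {q} := by rw [inter_comm, hSq]
    refine ih _ ?_ (P' ∪ S) (hP'.union (hsk S hS) hSq')
      (hP'.isSaturated_union hPs' (hsk S hS) hSq' fun T hT _ => ?_) rfl
    · rw [← hn]
      refine ncard_lt_ncard ⟨fun T hT => ⟨hT.1, fun h => hT.2 ((h.trans hPP').trans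
        subset_union_left)⟩, fun h => ?_⟩ (hfin.subset fun T hT => hT.1)
      exact (h ⟨hS, hSP⟩).2 subset_union_right
    · by_cases hTS : S = T
      · exact Or.inl hTS.ge
      · exact Or.inr (hS.inter_subsingleton (hsk S hS).isClosed hT hTS)

end Skeleta

section Telescope

open Filter Topology

variable {X Y : Type} [MetricSpace X] [MetricSpace Y] {P : Set X} {A : Set Y}

/-- A homotopy defined over a compact set extends over a neighborhood, with prescribed ends. -/
theorem IsNhdExtensor.exists_homotopy_extension (hP : IsNhdExtensor P) (hA : IsCompact A)
    (hne : A.Nonempty) {O₀ O₁ : Set Y} (hO₀ : IsOpen O₀) (hO₁ : IsOpen O₁) (hAO₀ : A ⊆ O₀)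
    (hAO₁ : A ⊆ O₁) {E₀ E₁ : Y → X} (hE₀ : ContinuousOn E₀ O₀) (hE₁ : ContinuousOn E₁ O₁)
    (hm₀ : MapsTo E₀ O₀ P) (hm₁ : MapsTo E₁ O₁ P) {k : Y × ℝ → X}
    (hk : ContinuousOn k (A ×ˢ Icc 0 1)) (hkm : MapsTo k (A ×ˢ Icc 0 1) P)
    (hk₀ : ∀ y ∈ A, k (y, 0) = E₀ y) (hk₁ : ∀ y ∈ A, k (y, 1) = E₁ y) {N : Set (Y × X)}
    (hN : IsOpen N) (hkN : ∀ y ∈ A, ∀ t ∈ Icc (0 : ℝ) 1, (y, k (y, t)) ∈ N) :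
    ∃ δ > 0, ∃ h : Y × ℝ → X, ContinuousOn h ({y | infDist y A < δ} ×ˢ Icc 0 1) ∧
      ∀ y, infDist y A < δ → h (y, 0) = E₀ y ∧ h (y, 1) = E₁ y ∧
        ∀ t ∈ Icc (0 : ℝ) 1, (y, h (y, t)) ∈ N := by
  obtain ⟨W, hW, hAW, hWO⟩ := normal_exists_closure_subset hA.isClosed (hO₀.inter hO₁)
    (subset_inter hAO₀ hAO₁)
  have hb₀ : IsClosed (closure W ×ˢ {(0 : ℝ)}) := isClosed_closure.prod isClosed_singleton
  have hb₁ : IsClosed (closure W ×ˢ {(1 : ℝ)}) := isClosed_closure.prod isClosed_singleton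
  set g : Y × ℝ → X := fun z => if z.2 = 0 then E₀ z.1 else E₁ z.1 with hg
  have hg₀ : EqOn g (fun z => E₀ z.1) (closure W ×ˢ {(0 : ℝ)}) := fun z hz => if_pos hz.2
  have hg₁ : EqOn g (fun z => E₁ z.1) (closure W ×ˢ {(1 : ℝ)}) := fun z hz =>
    if_neg (by rw [show z.2 = 1 from hz.2]; exact one_ne_zero)
  have hgc : ContinuousOn g (closure W ×ˢ {(0 : ℝ)} ∪ closure W ×ˢ {(1 : ℝ)}) := by
    refine ContinuousOn.union_of_isClosed ?_ ?_ hb₀ hb₁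
    · exact (hE₀.comp continuousOn_fst fun z hz => (hWO hz.1).1).congr hg₀
    · exact (hE₁.comp continuousOn_fst fun z hz => (hWO hz.1).2).congr hg₁
  have hgm : MapsTo g (closure W ×ˢ {(0 : ℝ)} ∪ closure W ×ˢ {(1 : ℝ)}) P := by
    rintro z (hz | hz)
    · rw [hg₀ hz]
      exact hm₀ (hWO hz.1).1
    · rw [hg₁ hz]
      exact hm₁ (hWO hz.1).2
  obtain ⟨U, h, hU, hsub, hh, -, hhk, hhg⟩ := hP.exists_extension_of_eqOn (f := k) (g := g)
    (hA.isClosed.prod isClosed_Icc) (hb₀.union hb₁) hk hgc hkm hgm (by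
      rintro ⟨y, t⟩ ⟨⟨hy, -⟩, hz | hz⟩
      · obtain rfl : t = 0 := hz.2
        rw [hg₀ hz, hk₀ y hy]
      · obtain rfl : t = 1 := hz.2
        rw [hg₁ hz, hk₁ y hy])
  have hopen : IsOpen (U ∩ (fun z : Y × ℝ => (z.1, h z)) ⁻¹' N) :=
    (continuousOn_fst.prodMk hh).isOpen_inter_preimage hU hN
  obtain ⟨V, V', hV, -, hAV, hIV, hVU⟩ := generalized_tube_lemma hA (isCompact_Icc (a := (0 : ℝ))
    (b := 1)) hopen (by
      rintro ⟨y, t⟩ ⟨hy, ht⟩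
      refine ⟨hsub (Or.inl ⟨hy, ht⟩), ?_⟩
      rw [mem_preimage, hhk ⟨hy, ht⟩]
      exact hkN y hy t ht)
  obtain ⟨δ, hδ, hδV⟩ := hA.exists_thickening_subset_open (hV.inter hW) (subset_inter hAV hAW)
  have hsubV : ∀ y, infDist y A < δ → y ∈ V ∩ W := fun y hy =>
    hδV ((mem_thickening_iff_infDist_lt hne).2 hy)
  refine ⟨δ, hδ, h, hh.mono ?_, fun y hy => ⟨?_, ?_, fun t ht => ?_⟩⟩
  · rintro ⟨y, t⟩ ⟨hy, ht⟩
    exact (hVU (mk_mem_prod (hsubV y hy).1 (hIV ht))).1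
  · have hz : (y, (0 : ℝ)) ∈ closure W ×ˢ {(0 : ℝ)} := ⟨subset_closure (hsubV y hy).2, rfl⟩
    rw [hhg (Or.inl hz), hg₀ hz]
  · have hz : (y, (1 : ℝ)) ∈ closure W ×ˢ {(1 : ℝ)} := ⟨subset_closure (hsubV y hy).2, rfl⟩
    rw [hhg (Or.inr hz), hg₁ hz]
  · exact (hVU (mk_mem_prod (hsubV y hy).1 (hIV ht))).2

/-- Homotopies over shrinking neighborhoods of `A` which fit together assemble to a single map
on a neighborhood of `A`. -/
theorem exists_continuousOn_of_homotopies (hA : IsClosed A) (hne : A.Nonempty) {ε : ℕ → ℝ}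
    (hε : ∀ n, 0 < ε n) {E : ℕ → Y → X} {h : ℕ → Y × ℝ → X}
    (hh : ∀ n, ContinuousOn (h n) ({y | infDist y A < ε n} ×ˢ Icc 0 1))
    (h₀ : ∀ n y, infDist y A < ε n → h n (y, 0) = E n y)
    (h₁ : ∀ n y, infDist y A < ε n → h n (y, 1) = E (n + 1) y) :
    ∃ δ > 0, ∃ R : Y → X, ContinuousOn R ({y | infDist y A < δ} \ A) ∧
      ∀ N, ∃ η > 0, ∀ y ∉ A, infDist y A < η → ∃ n ≥ N, infDist y A < ε n ∧
        ∃ t ∈ Icc (0 : ℝ) 1, R y = h n (y, t) := by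
  obtain ⟨δ, hδ⟩ : ∃ δ : ℕ → ℝ, ∀ n, 0 < δ n ∧ δ n < ε n ∧ δ (n + 1) < δ n ∧
      δ n ≤ ε 0 * (1 / 2) ^ n := by
    let δ : ℕ → ℝ := fun n => Nat.rec (ε 0 / 2) (fun k d => min (d / 2) (ε (k + 1) / 2)) n
    have hsucc : ∀ n, δ (n + 1) = min (δ n / 2) (ε (n + 1) / 2) := fun n => rfl
    have hpos : ∀ n, 0 < δ n := fun n => by
      induction n with
      | zero => exact half_pos (hε 0)
      | succ n ih => exact hsucc n ▸ lt_min (half_pos ih) (half_pos (hε _))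
    have hhalf : ∀ n, δ (n + 1) ≤ δ n / 2 := fun n => hsucc n ▸ min_le_left _ _
    refine ⟨δ, fun n => ⟨hpos n, ?_, (hhalf n).trans_lt (half_lt_self (hpos n)), ?_⟩⟩
    · cases n with
      | zero => exact half_lt_self (hε 0)
      | succ n =>
        rw [hsucc]
        exact (min_le_right _ _).trans_lt (half_lt_self (hε _))
    · induction n with
      | zero =>
        rw [pow_zero, mul_one]
        exact (half_lt_self (hε 0)).le
      | succ n ih =>
        refine (hhalf n).trans ?_
        rw [pow_succ]
        linarith
  have hδanti : StrictAnti δ := strictAnti_nat_of_succ_lt fun n => (hδ n).2.2.1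
  have hδ0 : Tendsto δ atTop (𝓝 0) := by
    refine squeeze_zero (fun n => (hδ n).1.le) (fun n => (hδ n).2.2.2) ?_
    simpa using (tendsto_pow_atTop_nhds_zero_of_lt_one (r := (1 / 2 : ℝ)) (by norm_num)
      (by norm_num)).const_mul (ε 0)
  have hex : ∀ y ∉ A, ∃ n, δ (n + 1) ≤ infDist y A := fun y hy => by
    have hpos : 0 < infDist y A := (hA.notMem_iff_infDist_pos hne).1 hy
    obtain ⟨n, hn⟩ := ((hδ0.comp (tendsto_add_atTop_nat 1)).eventually_lt_const hpos).exists
    exact ⟨n, hn.le⟩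
  set τ : ℕ → Y → ℝ := fun n y => (δ n - infDist y A) / (δ n - δ (n + 1)) with hτ
  have hτc : ∀ n, Continuous (τ n) := fun n =>
    (continuous_const.sub (continuous_infDist_pt A)).div_const _
  have hτm : ∀ n y, δ (n + 1) ≤ infDist y A → infDist y A ≤ δ n → τ n y ∈ Icc (0 : ℝ) 1 := by
    intro n y h₁ h₂
    have := (hδ n).2.2.1
    constructor
    · exact div_nonneg (by linarith) (by linarith)
    · exact (div_le_one (by linarith)).2 (by linarith)
  classical
  set R : Y → X := fun y => if hy : ∃ n, δ (n + 1) ≤ infDist y A then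
    h (Nat.find hy) (y, τ (Nat.find hy) y) else h 0 (y, 0) with hR
  have hRC : ∀ n y, δ (n + 1) ≤ infDist y A → infDist y A ≤ δ n → R y = h n (y, τ n y) := by
    intro n y hn₁ hn₂
    have hy : ∃ n, δ (n + 1) ≤ infDist y A := ⟨n, hn₁⟩
    simp only [hR, dif_pos hy]
    rcases (Nat.find_min' hy hn₁).eq_or_lt with heq | hlt
    · rw [heq]
    · have hf := Nat.find_spec hy
      set m := Nat.find hy
      have hmn : m + 1 = n := by
        refine le_antisymm hlt ?_
        exact hδanti.le_iff_ge.1 (hf.trans hn₂)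
      have hd : infDist y A = δ n := le_antisymm hn₂ (hmn ▸ hf)
      have hτ₁ : τ m y = 1 := by
        simp only [hτ]
        rw [hd, hmn]
        exact div_self (by have := hδanti (show m < n by omega); linarith)
      have hτ₀ : τ n y = 0 := by
        simp [hτ, hd]
      have hlt' : infDist y A < ε n := hd ▸ (hδ n).2.1
      have hlt'' : infDist y A < ε m := by
        rw [hd]
        exact (hδanti (show m < n by omega)).trans (hδ m).2.1
      rw [hτ₁, hτ₀, h₀ n y hlt', h₁ m y hlt'', hmn]
  have hC : ∀ n, IsClosed {y | δ (n + 1) ≤ infDist y A ∧ infDist y A ≤ δ n} := fun n =>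
    (isClosed_le continuous_const (continuous_infDist_pt A)).inter
      (isClosed_le (continuous_infDist_pt A) continuous_const)
  have hRCc : ∀ n, ContinuousOn R {y | δ (n + 1) ≤ infDist y A ∧ infDist y A ≤ δ n} := by
    intro n
    refine ContinuousOn.congr (f := fun y => h n (y, τ n y)) ?_ fun y hy => hRC n y hy.1 hy.2
    exact (hh n).comp (continuous_id.prodMk (hτc n)).continuousOn fun y hy =>
      ⟨hy.2.trans_lt (hδ n).2.1, hτm n y hy.1 hy.2⟩
  have hD : ∀ n, IsClosed {y | δ (n + 1) ≤ infDist y A ∧ infDist y A ≤ δ 0} := fun n =>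
    (isClosed_le continuous_const (continuous_infDist_pt A)).inter
      (isClosed_le (continuous_infDist_pt A) continuous_const)
  have hRD : ∀ n, ContinuousOn R {y | δ (n + 1) ≤ infDist y A ∧ infDist y A ≤ δ 0} := by
    intro n
    induction n with
    | zero => exact hRCc 0
    | succ n ih =>
      refine (ih.union_of_isClosed (hRCc (n + 1)) (hD n) (hC (n + 1))).mono ?_
      rintro y ⟨hy₁, hy₂⟩
      rcases le_total (δ (n + 1)) (infDist y A) with h | h
      · exact Or.inl ⟨h, hy₂⟩
      · exact Or.inr ⟨hy₁, h⟩
  refine ⟨δ 0, (hδ 0).1, R, ?_, fun N => ⟨δ N, (hδ N).1, fun y hy hyN => ?_⟩⟩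
  · rintro y ⟨hy, hyA⟩
    have hpos : 0 < infDist y A := (hA.notMem_iff_infDist_pos hne).1 hyA
    obtain ⟨n, hn⟩ := ((hδ0.comp (tendsto_add_atTop_nat 1)).eventually_lt_const hpos).exists
    refine ((hRD n).continuousAt ?_).continuousWithinAt
    filter_upwards [(continuous_infDist_pt A).continuousAt.eventually (lt_mem_nhds hn),
      (continuous_infDist_pt A).continuousAt.eventually (gt_mem_nhds hy)] with z hz₁ hz₂
    exact ⟨hz₁.le, hz₂.le⟩
  · have hyex := hex y hy
    have hf := Nat.find_spec hyex
    have hmin : infDist y A ≤ δ (Nat.find hyex) := by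
      rcases Nat.eq_zero_or_pos (Nat.find hyex) with h0 | h0
      · rw [h0]
        exact hyN.le.trans (hδanti.antitone N.zero_le)
      · have := Nat.find_min hyex (Nat.sub_lt h0 one_pos)
        rw [show Nat.find hyex - 1 + 1 = Nat.find hyex by omega] at this
        exact (not_le.1 this).le
    refine ⟨Nat.find hyex, ?_, hmin.trans_lt (hδ _).2.1, _, hτm _ y hf hmin, hRC _ y hf hmin⟩
    have : N < Nat.find hyex + 1 := hδanti.lt_iff_gt.1 (hf.trans_lt hyN)
    omega

/-- A compact space which is the uniform limit of a sequence of neighborhood extensors,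
consecutive ones being linked by small homotopies, is an absolute neighborhood retract. -/
theorem isANR_of_homotopies [CompactSpace X] [Nonempty X] {P : ℕ → Set X} (hPm : Monotone P)
    (hP : ∀ n, IsNhdExtensor (P n)) {r : ℕ → X → X} (hr : ∀ n, Continuous (r n))
    (hrP : ∀ n x, r n x ∈ P n) {K : ℕ → X × ℝ → X} (hK : ∀ n, Continuous (K n))
    (hKP : ∀ n z, K n z ∈ P (n + 1)) (hK₀ : ∀ n x, K n (x, 0) = r n x)
    (hK₁ : ∀ n x, K n (x, 1) = r (n + 1) x)
    (hlim : TendstoUniformly K Prod.fst atTop) : IsANR X := by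
  intro Y _ e he
  set A := range e with hA
  have hAc : IsCompact A := isCompact_range he.continuous
  have hne : A.Nonempty := range_nonempty e
  set i : Y → X := Function.invFun e
  have hie : ∀ x, i (e x) = x := Function.leftInverse_invFun he.injective
  have hi : ContinuousOn i A := by
    rw [he.isEmbedding.isInducing.continuousOn_iff]
    refine continuousOn_id.congr ?_
    rintro _ ⟨x, rfl⟩
    simp [hie]
  have hE : ∀ n, ∃ (O : Set Y) (E : Y → X), IsOpen O ∧ A ⊆ O ∧ ContinuousOn E O ∧
      MapsTo E O (P n) ∧ EqOn E (r n ∘ i) A := fun n =>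
    hP n Y A (r n ∘ i) hAc.isClosed ((hr n).comp_continuousOn hi) fun y _ => hrP n (i y)
  choose O E hO hAO hEc hEm hEr using hE
  have hlim' := (CompactSpace.uniformContinuous_of_continuous he.continuous).comp_tendstoUniformly
    hlim
  set D : ℕ → ℝ := fun n => ⨆ z : X × ℝ, dist (e z.1) (e (K n z))
  have hbdd : ∀ n, BddAbove (range fun z : X × ℝ => dist (e z.1) (e (K n z))) := fun n =>
    ⟨diam A, by
      rintro _ ⟨z, rfl⟩
      exact dist_le_diam_of_mem hAc.isBounded (mem_range_self _) (mem_range_self _)⟩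
  have hD : ∀ c > 0, ∀ᶠ n in atTop, D n ≤ c := fun c hc => by
    filter_upwards [Metric.tendstoUniformly_iff.1 hlim' c hc] with n hn
    exact Real.iSup_le (fun z => (hn z).le) hc.le
  have hlev : ∀ n : ℕ, ∃ δ > 0, ∃ h : Y × ℝ → X,
      ContinuousOn h ({y | infDist y A < δ} ×ˢ Icc 0 1) ∧
      ∀ y, infDist y A < δ → h (y, 0) = E n y ∧ h (y, 1) = E (n + 1) y ∧
        ∀ t ∈ Icc (0 : ℝ) 1, (y, h (y, t)) ∈
          {w : Y × X | dist w.1 (e w.2) < D n + 1 / ((n : ℝ) + 1)} := by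
    intro n
    refine (hP (n + 1)).exists_homotopy_extension (k := fun z => K n (i z.1, z.2)) hAc hne (hO n)
      (hO (n + 1)) (hAO n) (hAO (n + 1)) (hEc n) (hEc (n + 1))
      ((hEm n).mono_right (hPm n.le_succ)) (hEm (n + 1)) ?_ (fun z _ => hKP n _) ?_ ?_ ?_ ?_
    · exact (hK n).comp_continuousOn
        ((hi.comp continuousOn_fst fun z hz => hz.1).prodMk continuousOn_snd)
    · exact fun y hy => (hK₀ n _).trans (hEr n hy).symm
    · exact fun y hy => (hK₁ n _).trans (hEr (n + 1) hy).symm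
    · exact isOpen_lt (continuous_fst.dist (he.continuous.comp continuous_snd)) continuous_const
    · rintro _ ⟨x, rfl⟩ t -
      have h₁ : dist (e x) (e (K n (x, t))) ≤ D n := le_ciSup (hbdd n) (x, t)
      have h₂ : (0 : ℝ) < 1 / ((n : ℝ) + 1) := Nat.one_div_pos_of_nat
      simp only [mem_ofPred_eq, hie]
      linarith
  choose ε hε h hh hhE using hlev
  obtain ⟨δ, hδ, R, hRc, hRh⟩ := exists_continuousOn_of_homotopies hAc.isClosed hne hε hh
    (fun n y hy => (hhE n y hy).1) (fun n y hy => (hhE n y hy).2.1)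
  classical
  have hsmall : ∀ c > 0, ∃ η > 0, ∀ y ∉ A, infDist y A < η → dist y (e (R y)) < c := by
    intro c hc
    have hev : ∀ᶠ n : ℕ in atTop, 1 / ((n : ℝ) + 1) < c / 2 :=
      tendsto_one_div_add_atTop_nhds_zero_nat.eventually_lt_const (half_pos hc)
    obtain ⟨N, hN⟩ := eventually_atTop.1 ((hD (c / 2) (half_pos hc)).and hev)
    obtain ⟨η, hη, H⟩ := hRh N
    refine ⟨η, hη, fun y hy hyη => ?_⟩
    obtain ⟨n, hn, hyn, t, ht, hR⟩ := H y hy hyη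
    have h₁ : dist y (e (h n (y, t))) < D n + 1 / ((n : ℝ) + 1) := (hhE n y hyn).2.2 t ht
    rw [hR]
    linarith [(hN n hn).1, (hN n hn).2]
  set S : Y → Y := fun y => if y ∈ A then y else e (R y)
  have hSA : ∀ y ∈ A, S y = y := fun y hy => if_pos hy
  have hSnA : ∀ y ∉ A, S y = e (R y) := fun y hy => if_neg hy
  have hScont : ContinuousOn S {y | infDist y A < δ} := by
    intro y hy
    by_cases hyA : y ∈ A
    · refine ContinuousAt.continuousWithinAt ?_
      rw [ContinuousAt, hSA y hyA]
      have hclose : Tendsto (fun z => dist z (S z)) (𝓝 y) (𝓝 0) := by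
        rw [Metric.tendsto_nhds]
        intro c hc
        obtain ⟨η, hη, H⟩ := hsmall c hc
        have hy0 : infDist y A < η := by rwa [infDist_zero_of_mem hyA]
        filter_upwards [(continuous_infDist_pt A).continuousAt.eventually (gt_mem_nhds hy0)]
          with z hz
        by_cases hzA : z ∈ A
        · simpa [hSA z hzA] using hc
        · simpa [hSnA z hzA] using H z hzA hz
      exact (tendsto_iff_of_dist hclose).1 tendsto_id
    · have hopen : IsOpen ({y | infDist y A < δ} \ A) :=
        (isOpen_lt (continuous_infDist_pt A) continuous_const).sdiff hAc.isClosed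
      have hnhds := hopen.mem_nhds ⟨hy, hyA⟩
      refine ContinuousAt.continuousWithinAt ?_
      refine (he.continuous.continuousAt.comp (hRc.continuousAt hnhds)).congr ?_
      filter_upwards [hnhds] with z hz
      exact (hSnA z hz.2).symm
  refine ⟨{y | infDist y A < δ}, isOpen_lt (continuous_infDist_pt A) continuous_const,
    fun y hy => ?_, ⟨_, hScont.domRestrict⟩, fun u => ?_, fun x hx => ?_⟩
  · rwa [mem_ofPred_eq, infDist_zero_of_mem hy]
  · by_cases hu : (u : Y) ∈ A
    · obtain ⟨x, hx⟩ := hu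
      exact ⟨x, hx.trans (hSA _ ⟨x, hx⟩).symm⟩
    · exact ⟨R u, (hSnA _ hu).symm⟩
  · exact hSA (e x) (mem_range_self x)

end Telescope

section Exhaustion

open Filter Topology

variable {X : Type} [MetricSpace X] {P : Set X}

theorem IsSkeleton.noChord_of_forall_subset (hP : IsSkeleton P)
    (hPT : ∀ T, MaximalCyclic T → T ⊆ P) : NoChord P :=
  hP.noChord fun T hT => Or.inl (hPT T hT)

/-- Enlarging a skeleton by an arc to a prescribed point, together with a homotopy between the
retractions onto the two skeleta. -/
theorem IsSkeleton.exists_extend [PathConnectedSpace X] [LocallyPathConnectedSpace X]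
    (hP : IsSkeleton P) (hPT : ∀ T, MaximalCyclic T → T ⊆ P) (x : X) :
    ∃ Q, P ⊆ Q ∧ IsSkeleton Q ∧ x ∈ Q ∧ ∃ K : X × ℝ → X, Continuous K ∧ (∀ z, K z ∈ Q) ∧
      (∀ z, K (z, 0) = entryPoint P z) ∧ (∀ z, K (z, 1) = entryPoint Q z) ∧
      ∀ z, entryPoint P (K z) = entryPoint P z.1 := by
  have hch := hP.noChord_of_forall_subset hPT
  have hrc := hch.continuous_entryPoint hP.isClosed hP.nonempty
  by_cases hx : x ∈ P
  · refine ⟨P, subset_rfl, hP, hx, fun z => entryPoint P z.1, hrc.comp continuous_fst,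
      fun z => (entryPoint_spec hP.isClosed hP.nonempty z.1).1, fun _ => rfl, fun _ => rfl,
      fun z => hch.entryPoint_of_mem (entryPoint_spec hP.isClosed hP.nonempty z.1).1⟩
  obtain ⟨y, hy⟩ := hP.nonempty
  obtain ⟨B, -, hB⟩ := (joinedIn_univ.2 (PathConnectedSpace.joined x y)).exists_isArc
    fun h => hx (h ▸ hy)
  obtain ⟨p, hp, A, -, hA, hAP⟩ := hB.exists_first_hit hP.isClosed hx ⟨y, hB.right_mem, hy⟩
  have hPA : P ∩ A = {p} := by rw [inter_comm, hAP]
  have hQ : IsSkeleton (P ∪ A) := hP.union hA.isSkeleton hPA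
  have hQT : ∀ T, MaximalCyclic T → T ⊆ P ∪ A := fun T hT => (hPT T hT).trans subset_union_left
  have hchQ := hQ.noChord_of_forall_subset hQT
  have hrcQ := hchQ.continuous_entryPoint hQ.isClosed hQ.nonempty
  obtain ⟨f, g, hf, hfA, hf₀, -, hg, hg₀, hfg⟩ := hA.symm.exists_param
  have hrA : ∀ z ∈ A, entryPoint P z = p := fun z hz =>
    (hch.entryPoint_eq_of_subsingleton hP.isClosed hP.nonempty hA.isSkeleton.joinedIn
      (by rw [hAP]; exact subsingleton_singleton) hz hA.right_mem).trans (hch.entryPoint_of_mem hp)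
  classical
  set H : X × ℝ → X := fun z => if z.1 ∈ P then z.1 else f (z.2 * g z.1)
  have hHP : ∀ z t, z ∈ P → H (z, t) = z := fun z _ hz => if_pos hz
  have hHA : ∀ z t, z ∈ A → H (z, t) = f (t * g z) := fun z t hz => by
    by_cases hzP : z ∈ P
    · have hzp : z = p := by
        have : z ∈ P ∩ A := ⟨hzP, hz⟩
        rwa [hPA] at this
      rw [hHP z t hzP, hzp, hg₀, mul_zero, hf₀]
    · exact if_neg hzP
  have hHc : ContinuousOn H ((P ∪ A) ×ˢ univ) := by
    rw [union_prod]
    refine ContinuousOn.union_of_isClosed ?_ ?_ (hP.isClosed.prod isClosed_univ)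
      (hA.isClosed.prod isClosed_univ)
    · exact continuousOn_fst.congr fun z hz => hHP z.1 z.2 hz.1
    · refine ContinuousOn.congr ?_ fun z hz => hHA z.1 z.2 hz.1
      exact hf.comp_continuousOn
        (continuousOn_snd.mul (hg.comp continuousOn_fst fun z hz => hz.1))
  have hrQ : ∀ z, entryPoint (P ∪ A) z ∈ P ∪ A := fun z =>
    (entryPoint_spec hQ.isClosed hQ.nonempty z).1
  have hrr : ∀ z, entryPoint P (entryPoint (P ∪ A) z) = entryPoint P z :=
    hch.entryPoint_entryPoint hP.isClosed hP.nonempty hQ.isClosed subset_union_left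
  refine ⟨P ∪ A, subset_union_left, hQ, Or.inr hA.left_mem,
    fun z => H (entryPoint (P ∪ A) z.1, z.2), ?_, fun z => ?_, fun z => ?_, fun z => ?_,
    fun z => ?_⟩
  · exact hHc.comp_continuous ((hrcQ.comp continuous_fst).prodMk continuous_snd)
      fun z => ⟨hrQ z.1, mem_univ _⟩
  · dsimp only
    rcases hrQ z.1 with h | h
    · rw [hHP _ _ h]
      exact Or.inl h
    · rw [hHA _ _ h]
      exact Or.inr (hfA _)
  · dsimp only
    rw [← hrr z]
    rcases hrQ z with h | h
    · rw [hHP _ _ h, hch.entryPoint_of_mem h]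
    · rw [hHA _ _ h, hrA _ h, zero_mul, hf₀]
  · dsimp only
    rcases hrQ z with h | h
    · rw [hHP _ _ h]
    · rw [hHA _ _ h, one_mul, hfg _ h]
  · dsimp only
    rw [← hrr z.1]
    rcases hrQ z.1 with h | h
    · rw [hHP _ _ h]
    · rw [hHA _ _ h, hrA _ h, hrA _ (hfA _)]

/-- Retractions onto an increasing dense sequence of chordless sets converge uniformly. -/
theorem tendstoUniformly_entryPoint [CompactSpace X] [LocallyPathConnectedSpace X]
    {P : ℕ → Set X} (hPm : Monotone P) (hPc : ∀ n, IsClosed (P n)) (hP : ∀ n, NoChord (P n))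
    (hd : Dense (⋃ n, P n)) : TendstoUniformly (fun n => entryPoint (P n)) id atTop := by
  rw [Metric.tendstoUniformly_iff]
  intro ε hε
  have key : ∀ x : X, ∃ W ∈ 𝓝 x, ∀ᶠ n in atTop, ∀ z ∈ W, dist z (entryPoint (P n) z) < ε := by
    intro x
    obtain ⟨W, ⟨hWo, hxW, hW⟩, hWε⟩ :=
      (isOpen_isPathConnected_basis x).mem_iff.1 (ball_mem_nhds x (half_pos hε))
    obtain ⟨y, hyW, hy⟩ := hd.inter_open_nonempty W hWo ⟨x, hxW⟩
    obtain ⟨m, hm⟩ := mem_iUnion.1 hy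
    refine ⟨W, hWo.mem_nhds hxW, ?_⟩
    filter_upwards [eventually_ge_atTop m] with n hn z hz
    have h₁ := hWε ((hP n).entryPoint_mem_of_joinedIn (hPc n) (hW.joinedIn z hz y hyW)
      (hPm hn hm))
    have h₂ := hWε hz
    rw [mem_ball] at h₁ h₂
    linarith [dist_triangle_right z (entryPoint (P n) z) x]
  choose W hW hWe using key
  obtain ⟨t, -, ht⟩ := isCompact_univ.elim_nhds_subcover W fun x _ => hW x
  filter_upwards [(Filter.eventually_all_finset t).2 fun x _ => hWe x] with n hn z
  obtain ⟨x, hx, hz⟩ := mem_iUnion₂.1 (ht (mem_univ z))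
  exact hn x hx z hz

theorem IsSkeleton.isANR [CompactSpace X] [PathConnectedSpace X] [LocallyPathConnectedSpace X]
    (hP : IsSkeleton P) (hPT : ∀ T, MaximalCyclic T → T ⊆ P) : IsANR X := by
  have hne : Nonempty X := PathConnectedSpace.nonempty
  choose! Q hPQ hQ hxQ K hK hKQ hK₀ hK₁ hKP using
    fun (P : Set X) (h : IsSkeleton P ∧ ∀ T, MaximalCyclic T → T ⊆ P) (x : X) =>
      h.1.exists_extend h.2 x
  let S : ℕ → Set X := fun n => Nat.rec P (fun k R => Q R (TopologicalSpace.denseSeq X k)) n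
  have hS : ∀ n, IsSkeleton (S n) ∧ ∀ T, MaximalCyclic T → T ⊆ S n := fun n => by
    induction n with
    | zero => exact ⟨hP, hPT⟩
    | succ n ih => exact ⟨hQ _ ih _, fun T hT => (ih.2 T hT).trans (hPQ _ ih _)⟩
  have hSm : Monotone S := monotone_nat_of_le_succ fun n => hPQ _ (hS n) _
  have hch : ∀ n, NoChord (S n) := fun n => (hS n).1.noChord_of_forall_subset (hS n).2
  have hd : Dense (⋃ n, S n) := by
    refine (TopologicalSpace.denseRange_denseSeq X).mono ?_
    rintro _ ⟨n, rfl⟩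
    exact mem_iUnion.2 ⟨n + 1, hxQ _ (hS n) _⟩
  have hu := tendstoUniformly_entryPoint hSm (fun n => (hS n).1.isClosed) hch hd
  refine isANR_of_homotopies hSm (fun n => (hS n).1.isNhdExtensor)
    (r := fun n => entryPoint (S n))
    (fun n => (hch n).continuous_entryPoint (hS n).1.isClosed (hS n).1.nonempty)
    (fun n z => (entryPoint_spec (hS n).1.isClosed (hS n).1.nonempty z).1)
    (K := fun n => K (S n) (TopologicalSpace.denseSeq X n))
    (fun n => hK _ (hS n) _) (fun n => hKQ _ (hS n) _) (fun n => hK₀ _ (hS n) _)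
    (fun n => hK₁ _ (hS n) _) ?_
  rw [Metric.tendstoUniformly_iff] at hu ⊢
  intro ε hε
  filter_upwards [hu (ε / 2) (half_pos hε)] with n hn z
  have h₁ := hn z.1
  have h₂ := hn (K (S n) (TopologicalSpace.denseSeq X n) z)
  rw [hKP _ (hS n)] at h₂
  rw [id] at h₁ h₂
  linarith [dist_triangle_right z.1 (K (S n) (TopologicalSpace.denseSeq X n) z)
    (entryPoint (S n) z.1)]

end Exhaustion

/-- A finite-dimensional generalized cactoid (a Peano space whose maximal cyclic
subsets are closed surfaces, only finitely many of which are not 2-spheres) is an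
ANR if and only if it has only finitely many maximal cyclic subsets. -/
theorem generalizedCactoid_isANR_iff_finitely_many_maximalCyclic
    (X : Type) [MetricSpace X] [CompactSpace X] [ConnectedSpace X] [LocallyConnectedSpace X]
    (hdim : ∃ n : ℕ, CovDimLE X n)
    (hsurf : ∀ T : Set X, MaximalCyclic T → IsClosedSurface ↥T)
    (hfin : {T : Set X | MaximalCyclic T ∧ ¬ IsTopological2Sphere ↥T}.Finite) :
    IsANR X ↔ {T : Set X | MaximalCyclic T}.Finite := by
  have : LocallyPathConnectedSpace X := locallyPathConnectedSpace_of_compact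
  have : PathConnectedSpace X := PathConnectedSpace.of_locallyPathConnectedSpace
  constructor
  · intro hX
    refine (hfin.union (hX.finite_maximalCyclic_not_contractible fun T hT =>
      ((hsurf T hT).isSkeleton hT.2.1).isClosed)).subset fun T hT => ?_
    by_cases h : IsTopological2Sphere T
    · refine Or.inr ⟨hT, fun hc => ?_⟩
      obtain ⟨e⟩ := h
      exact not_contractibleSpace_sphere e.symm.contractibleSpace
    · exact Or.inl ⟨hT, h⟩
  · intro hT
    obtain ⟨P, hP, hPT⟩ := exists_isSkeleton_superset_maximalCyclic hsurf hT
    exact hP.isANR hPT
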